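/- arXiv:1712.08306 — 9 statements merged into one kernel-verified Lean document; each statement's English description precedes it below -/
import Mathlib

section
/- For all integers i, j and every integer k ≥ 1, the bimoment determinants satisfy the bilinear identity G_k^{(i,j+1)} F_{k−1}^{(i+1,j)} = F_k^{(i,j)} G_{k−1}^{(i+1,j+1)} + F_{k−1}^{(i+1,j+1)} G_k^{(i,j)}. -/
open Finset

/-- Single moments `α_i = Σ_p ζ_p^i a_p`. -/
noncomputable def alphaM (n : ℕ) (ζ a : Fin n → ℝ) (i : ℤ) : ℝ :=
  ∑ p : Fin n, ζ p ^ i * a p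

/-- Bimoments `I_{i,j} = Σ_p Σ_q ζ_p^i ζ_q^j / (ζ_p + ζ_q) a_p a_q`. -/
noncomputable def Imom (n : ℕ) (ζ a : Fin n → ℝ) (i j : ℤ) : ℝ :=
  ∑ p : Fin n, ∑ q : Fin n, ζ p ^ i * ζ q ^ j / (ζ p + ζ q) * (a p * a q)

/-- `F_k^{(i,j)} = det (I_{i+r,j+s})_{0 ≤ r,s ≤ k-1}`, with `F_0 = 1` and `F_k = 0` for `k < 0`. -/
noncomputable def Fdet (n : ℕ) (ζ a : Fin n → ℝ) (i j k : ℤ) : ℝ :=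
  if k < 0 then 0
  else Matrix.det (Matrix.of fun r s : Fin k.toNat =>
    Imom n ζ a (i + ((r : ℕ) : ℤ)) (j + ((s : ℕ) : ℤ)))

/-- `G_k^{(i,j)}`: first column `(α_{i-1}, …, α_{i+k-2})ᵀ`, remaining block
`(I_{i+r,j+s})_{0 ≤ r ≤ k-1, 0 ≤ s ≤ k-2}`; `G_1 = α_{i-1}` and `G_k = 0` for `k < 1`. -/
noncomputable def Gdet (n : ℕ) (ζ a : Fin n → ℝ) (i j k : ℤ) : ℝ :=
  if k < 1 then 0
  else Matrix.det (Matrix.of fun r s : Fin k.toNat =>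
    if (s : ℕ) = 0 then alphaM n ζ a (i - 1 + ((r : ℕ) : ℤ))
    else Imom n ζ a (i + ((r : ℕ) : ℤ)) (j + (((s : ℕ) - 1 : ℕ) : ℤ)))

/-- `E_k^{(i,j)}`: `(1,1)` entry `0`, first row `(0, α_{j-1}, …, α_{j+k-3})`, first column
`(0, α_{i-1}, …, α_{i+k-3})ᵀ`, remaining block `(I_{i+r,j+s})_{0 ≤ r,s ≤ k-2}`;
`E_k = 0` for `k < 2`. -/
noncomputable def Edet (n : ℕ) (ζ a : Fin n → ℝ) (i j k : ℤ) : ℝ :=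
  if k < 2 then 0
  else Matrix.det (Matrix.of fun r s : Fin k.toNat =>
    if (r : ℕ) = 0 then
      (if (s : ℕ) = 0 then 0 else alphaM n ζ a (j - 1 + (((s : ℕ) - 1 : ℕ) : ℤ)))
    else if (s : ℕ) = 0 then alphaM n ζ a (i - 1 + (((r : ℕ) - 1 : ℕ) : ℤ))
    else Imom n ζ a (i + (((r : ℕ) - 1 : ℕ) : ℤ)) (j + (((s : ℕ) - 1 : ℕ) : ℤ)))

theorem exchange_aux (m : ℕ) (N B : Matrix (Fin (m+1)) (Fin (m+1)) ℝ) (b : Fin (m+1) → ℝ) :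
    N.det * (B.updateCol 0 b).det =
      ∑ i, (N.updateCol i b).det * (B.updateCol 0 (fun r => N r i)).det := by
  have h := Matrix.mulVec_cramer N b
  have h2 : N.det * (Matrix.cramer B b) 0 = (Matrix.cramer B (N.det • b)) 0 := by
    simp
  rw [← Matrix.cramer_apply, h2, ← h]
  have h3 : N.mulVec (N.cramer b) = ∑ i, (N.cramer b i) • (fun r => N r i) := by
    ext r
    simp [Matrix.mulVec, dotProduct, mul_comm]
  rw [h3, map_sum]
  simp [Matrix.cramer_apply]

theorem col_aux (m : ℕ) (d : ℕ → ℕ → ℝ) :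
    (Matrix.of fun r s : Fin (m+1) =>
      if (s : ℕ) = 0 then (if (r : ℕ) = 0 then (1 : ℝ) else 0) else d r s).det =
    (Matrix.of fun r s : Fin m => d (r+1) (s+1)).det := by
  rw [Matrix.det_succ_column_zero, Fin.sum_univ_succ, Finset.sum_eq_zero]
  · simp only [Matrix.of_apply, Fin.val_zero]
    simp
    congr 1
  · intro x _
    simp

theorem plucker_aux (m : ℕ) (α : ℕ → ℝ) (c : ℕ → ℕ → ℝ) :
    (Matrix.of fun r s : Fin (m+2) => if (s : ℕ) = 0 then α r else c r s).det *
      (Matrix.of fun r s : Fin (m+1) => c (r+1) s).det =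
    (Matrix.of fun r s : Fin (m+2) => c r s).det *
      (Matrix.of fun r s : Fin (m+1) => if (s : ℕ) = 0 then α (r+1) else c (r+1) s).det +
    (Matrix.of fun r s : Fin (m+1) => c (r+1) (s+1)).det *
      (Matrix.of fun r s : Fin (m+2) => if (s : ℕ) = 0 then α r else c r (s-1)).det := by
  have key := exchange_aux (m+1)
    (Matrix.of fun r s : Fin (m+2) =>
      if (s : ℕ) = 0 then (if (r : ℕ) = 0 then (1 : ℝ) else 0) else c r (s-1))
    (Matrix.of fun r s : Fin (m+2) => c r s) (fun r => α r)
  have e1 := col_aux (m+1) (fun r s => c r (s-1))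
  have e2 := col_aux (m+1) (fun r s => if s = 1 then α r else c r (s-1))
  have e3 := col_aux (m+1) c
  simp only [Nat.add_sub_cancel] at e1 e2
  rw [Fin.sum_univ_succ, Fin.sum_univ_succ, Finset.sum_eq_zero, e1] at key
  · rw [add_zero] at key
    have f1 : ((Matrix.of fun r s : Fin (m+2) => c r s).updateCol 0 (fun r => α r)) =
        (Matrix.of fun r s : Fin (m+2) => if (s : ℕ) = 0 then α r else c r s) := by
      ext r s
      simp only [Matrix.updateCol_apply, Matrix.of_apply, Fin.ext_iff, Fin.val_succ, Fin.val_castSucc, Fin.val_zero] <;> simp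
    have f2 : ((Matrix.of fun r s : Fin (m+2) =>
      if (s : ℕ) = 0 then (if (r : ℕ) = 0 then (1 : ℝ) else 0) else c r (s-1)).updateCol 0
        (fun r => α r)) =
        (Matrix.of fun r s : Fin (m+2) => if (s : ℕ) = 0 then α r else c r (s-1)) := by
      ext r s
      by_cases h : (s : ℕ) = 0 <;> simp only [Matrix.updateCol_apply, Matrix.of_apply, Fin.ext_iff, Fin.val_succ, Fin.val_zero, h] <;> simp
    have f3 : ((Matrix.of fun r s : Fin (m+2) =>
      if (s : ℕ) = 0 then (if (r : ℕ) = 0 then (1 : ℝ) else 0) else c r (s-1)).updateCol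
        (Fin.succ 0) (fun r => α r)) =
        (Matrix.of fun r s : Fin (m+2) => if (s : ℕ) = 0 then (if (r : ℕ) = 0 then (1 : ℝ) else 0)
          else if (s : ℕ) = 1 then α r else c r (s-1)) := by
      ext r s
      by_cases h : (s : ℕ) = 0 <;> simp only [Matrix.updateCol_apply, Matrix.of_apply, Fin.ext_iff, Fin.val_succ, Fin.val_zero, h] <;> simp
    have f4 : ((Matrix.of fun r s : Fin (m+2) => c r s).updateCol 0 (fun r =>
        (Matrix.of fun r s : Fin (m+2) =>
      if (s : ℕ) = 0 then (if (r : ℕ) = 0 then (1 : ℝ) else 0) else c r (s-1)) r 0)) =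
        (Matrix.of fun r s : Fin (m+2) =>
          if (s : ℕ) = 0 then (if (r : ℕ) = 0 then (1 : ℝ) else 0) else c r s) := by
      ext r s
      by_cases h : (s : ℕ) = 0 <;> simp only [Matrix.updateCol_apply, Matrix.of_apply, Fin.ext_iff, Fin.val_succ, Fin.val_zero, h] <;> simp
    have f5 : ((Matrix.of fun r s : Fin (m+2) => c r s).updateCol 0 (fun r =>
        (Matrix.of fun r s : Fin (m+2) =>
      if (s : ℕ) = 0 then (if (r : ℕ) = 0 then (1 : ℝ) else 0) else c r (s-1)) r (Fin.succ 0))) =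
        (Matrix.of fun r s : Fin (m+2) => c r s) := by
      ext r s
      by_cases h : (s : ℕ) = 0 <;> simp only [Matrix.updateCol_apply, Matrix.of_apply, Fin.ext_iff, Fin.val_succ, Fin.val_zero, h] <;> simp
    have e2' : (Matrix.of fun r s : Fin (m+1) =>
        if (s : ℕ) + 1 = 1 then α (r+1) else c (r+1) s) =
        (Matrix.of fun r s : Fin (m+1) => if (s : ℕ) = 0 then α (r+1) else c (r+1) s) := by
      ext r s
      simp
    rw [f1, f2, f3, f4, f5, e2, e2', e3] at key
    linarith
  · intro x _
    apply mul_eq_zero_of_right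
    apply Matrix.det_zero_of_column_eq (i := 0) (j := x.succ.castSucc)
    · simp [Fin.ext_iff]
    · intro r
      simp only [Matrix.updateCol_apply, Matrix.of_apply, Fin.ext_iff, Fin.val_succ, Fin.val_castSucc, Fin.val_zero] <;> simp

/-- Lemma 2.8, identity (2.17): for all `i, j ∈ ℤ` and `k ≥ 1`,
`G_k^{(i,j+1)} F_{k-1}^{(i+1,j)} = F_k^{(i,j)} G_{k-1}^{(i+1,j+1)} + F_{k-1}^{(i+1,j+1)} G_k^{(i,j)}`. -/
theorem stmt_8 (n : ℕ) (hn : 1 ≤ n) (ζ a : Fin n → ℝ)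
    (hζ0 : ∀ p, 0 < ζ p) (hζmono : StrictMono ζ) (ha : ∀ p, 0 < a p)
    (i j k : ℤ) (hk : 1 ≤ k) :
    Gdet n ζ a i (j + 1) k * Fdet n ζ a (i + 1) j (k - 1) =
      Fdet n ζ a i j k * Gdet n ζ a (i + 1) (j + 1) (k - 1) +
        Fdet n ζ a (i + 1) (j + 1) (k - 1) * Gdet n ζ a i j k := by
  obtain ⟨l, rfl⟩ : ∃ l : ℕ, k = (l : ℤ) + 1 := ⟨(k - 1).toNat, by omega⟩
  rcases l with _ | m
  · simp [Gdet, Fdet]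
  · have t1 : (((m + 1 : ℕ) : ℤ) + 1).toNat = m + 2 := by omega
    have t2 : (((m + 1 : ℕ) : ℤ) + 1 - 1).toNat = m + 1 := by omega
    have n1 : ¬ ((m + 1 : ℕ) : ℤ) + 1 < 1 := by omega
    have n2 : ¬ ((m + 1 : ℕ) : ℤ) + 1 < 0 := by omega
    have n3 : ¬ ((m + 1 : ℕ) : ℤ) + 1 - 1 < 1 := by omega
    have n4 : ¬ ((m + 1 : ℕ) : ℤ) + 1 - 1 < 0 := by omega
    have key := plucker_aux m (fun r => alphaM n ζ a (i - 1 + (r : ℤ)))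
      (fun r s => Imom n ζ a (i + (r : ℤ)) (j + (s : ℤ)))
    unfold Gdet Fdet
    rw [if_neg n1, if_neg n2, if_neg n3, if_neg n4, if_neg n4, if_neg n1, t1, t2]
    convert key using 4
    all_goals
      first
      | rfl
      | (ext r s
         try simp only [Matrix.of_apply]
         try split_ifs
         all_goals (congr 1 <;> (push_cast; omega)))
end

section
/- For all integers i, j and every integer k ≥ 1, the bimoment determinants satisfy the bilinear identity E_k^{(i,j+1)} F_{k−1}^{(i,j)} = G_k^{(j,i)} G_{k−1}^{(i,j+1)} + E_k^{(i,j)} F_{k−1}^{(i,j+1)}. -/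
open Finset

/-- The matrix with first row `x` and remaining rows `u`. -/
def consM {m : ℕ} (x : Fin (m+1) → ℝ) (u : Fin m → Fin (m+1) → ℝ) :
    Matrix (Fin (m+1)) (Fin (m+1)) ℝ := Matrix.of (Fin.cons x u)

theorem consM_zero {m : ℕ} (x : Fin (m+1) → ℝ) (u : Fin m → Fin (m+1) → ℝ) (s : Fin (m+1)) :
    consM x u 0 s = x s := rfl

theorem consM_succ {m : ℕ} (x : Fin (m+1) → ℝ) (u : Fin m → Fin (m+1) → ℝ) (r : Fin m)
    (s : Fin (m+1)) : consM x u r.succ s = u r s := rfl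

theorem consM_update {m : ℕ} (x y : Fin (m+1) → ℝ) (u : Fin m → Fin (m+1) → ℝ) :
    (consM x u).updateRow 0 y = consM y u := by
  ext r s
  refine Fin.cases ?_ (fun r => ?_) r
  · rw [Matrix.updateRow_self, consM_zero]
  · rw [Matrix.updateRow_ne (Fin.succ_ne_zero _), consM_succ, consM_succ]

theorem plucker_aux_s9 (M : ℕ) (c e : Fin (M+2) → ℝ) (v : Fin (M+2) → Fin (M+2) → ℝ) :
    Matrix.det (consM c (fun s : Fin (M+1) => v s.succ)) *
      Matrix.det (consM e (fun s : Fin (M+1) => v s.castSucc)) =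
    Matrix.det (consM e (fun s : Fin (M+1) => v s.succ)) *
      Matrix.det (consM c (fun s : Fin (M+1) => v s.castSucc)) +
    Matrix.det (Matrix.updateRow (consM c (fun s : Fin (M+1) => v s.succ)) (Fin.last (M+1)) e) *
      Matrix.det (consM (v (Fin.last (M+1))) (fun s : Fin (M+1) => v s.castSucc)) := by
  set A : Matrix (Fin (M+2)) (Fin (M+2)) ℝ := consM c (fun s : Fin (M+1) => v s.succ) with hA
  set B : Matrix (Fin (M+2)) (Fin (M+2)) ℝ :=
    consM e (fun s : Fin (M+1) => v s.castSucc) with hB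
  have hcr : A.det • e = ∑ i, (A.updateRow i e).det • A i := by
    have h := Matrix.mulVec_cramer A.transpose e
    rw [Matrix.det_transpose] at h
    rw [← h]
    ext s
    simp [Matrix.mulVec, dotProduct, Matrix.cramer_transpose_apply, mul_comm]
  let L : (Fin (M+2) → ℝ) →ₗ[ℝ] ℝ :=
    (Matrix.detRowAlternating (n := Fin (M+2)) (R := ℝ)).toMultilinearMap.toLinearMap B 0
  have hL : ∀ x, L x = Matrix.det (consM x (fun s : Fin (M+1) => v s.castSucc)) := by
    intro x
    change Matrix.det (B.updateRow 0 x) = _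
    rw [hB, consM_update]
  have h2 := congrArg L hcr
  rw [map_smul, map_sum, Fin.sum_univ_succ, Fin.sum_univ_castSucc] at h2
  simp only [map_smul, smul_eq_mul] at h2
  rw [Finset.sum_eq_zero] at h2
  · rw [hL, hL, hL, zero_add] at h2
    rw [h2]
    rw [hA, consM_update]
    rfl
  · intro s _
    rw [hL]
    apply mul_eq_zero_of_right
    refine Matrix.det_zero_of_row_eq (i := 0) (j := s.succ.succ) (Fin.succ_ne_zero _).symm ?_
    ext t
    rw [consM_zero, consM_succ, hA, consM_succ]
    rfl

theorem rot_aux (m : ℕ) (v : Fin (m+1) → Fin (m+1) → ℝ) :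
    Matrix.det (consM (v (Fin.last m)) (fun s : Fin m => v s.castSucc)) = (-1) ^ m * Matrix.det (Matrix.of v) := by
  have h := Matrix.det_permute (finRotate (m+1)) (consM (v (Fin.last m))
    (fun s : Fin m => v s.castSucc))
  have h3 : (consM (v (Fin.last m)) (fun s : Fin m => v s.castSucc)).submatrix (finRotate (m+1)) id = Matrix.of v := by
    ext r s
    refine Fin.lastCases ?_ (fun r => ?_) r
    · simp [Matrix.submatrix, finRotate_last, consM_zero]
    · simp [Matrix.submatrix, finRotate_apply, Fin.coeSucc_eq_succ, consM_succ]
  rw [h3] at h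
  rw [h, sign_finRotate]
  push_cast
  rw [← mul_assoc, ← pow_add, Even.neg_one_pow ⟨m, rfl⟩, one_mul]

theorem exp_zero_aux (m : ℕ) (u : Fin m → Fin (m+1) → ℝ) :
    Matrix.det (consM (Pi.single 0 1) u) =
      Matrix.det (Matrix.of fun r s : Fin m => u r s.succ) := by
  rw [Matrix.det_succ_row_zero, Fin.sum_univ_succ, Finset.sum_eq_zero]
  · simp [consM_zero]
    congr 1
  · intro s _
    simp [consM_zero]

theorem exp_last_aux (m : ℕ) (A : Matrix (Fin (m+1)) (Fin (m+1)) ℝ) :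
    Matrix.det (A.updateRow (Fin.last m) (Pi.single 0 1)) =
      (-1) ^ m * Matrix.det (Matrix.of fun r s : Fin m => A r.castSucc s.succ) := by
  rw [Matrix.det_succ_row _ (Fin.last m), Fin.sum_univ_succ, Finset.sum_eq_zero]
  · simp
    congr 1
    ext r s
    simp [Matrix.submatrix, Matrix.updateRow_apply, Fin.succAbove_last, (Fin.castSucc_lt_last r).ne]
  · intro s _
    simp

theorem Imom_symm_aux (n : ℕ) (ζ a : Fin n → ℝ) (i j : ℤ) :
    Imom n ζ a i j = Imom n ζ a j i := by
  unfold Imom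
  rw [Finset.sum_comm]
  refine Finset.sum_congr rfl fun p _ => Finset.sum_congr rfl fun q _ => ?_
  rw [add_comm (ζ q), mul_comm (a q), mul_comm (ζ q ^ i)]

/-- Lemma 2.8, identity (2.18): for all `i, j ∈ ℤ` and `k ≥ 1`,
`E_k^{(i,j+1)} F_{k-1}^{(i,j)} = G_k^{(j,i)} G_{k-1}^{(i,j+1)} + E_k^{(i,j)} F_{k-1}^{(i,j+1)}`. -/
theorem stmt_9 (n : ℕ) (hn : 1 ≤ n) (ζ a : Fin n → ℝ)
    (hζ0 : ∀ p, 0 < ζ p) (hζmono : StrictMono ζ) (ha : ∀ p, 0 < a p)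
    (i j k : ℤ) (hk : 1 ≤ k) :
    Edet n ζ a i (j + 1) k * Fdet n ζ a i j (k - 1) =
      Gdet n ζ a j i k * Gdet n ζ a i (j + 1) (k - 1) +
        Edet n ζ a i j k * Fdet n ζ a i (j + 1) (k - 1) := by
  obtain ⟨m, rfl⟩ : ∃ m : ℕ, k = m + 1 := ⟨(k - 1).toNat, by omega⟩
  rcases m with _ | M
  · simp [Edet, Gdet]
  let c : Fin (M+2) → ℝ := fun s =>
    if (s : ℕ) = 0 then 0 else alphaM n ζ a (i - 1 + (((s : ℕ) - 1 : ℕ) : ℤ))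
  let v : Fin (M+2) → Fin (M+2) → ℝ := fun r s =>
    if (s : ℕ) = 0 then alphaM n ζ a (j - 1 + ((r : ℕ) : ℤ))
    else Imom n ζ a (j + ((r : ℕ) : ℤ)) (i + (((s : ℕ) - 1 : ℕ) : ℤ))
  have hP := plucker_aux_s9 M c (Pi.single 0 1) v
  rw [rot_aux, exp_zero_aux, exp_zero_aux, exp_last_aux] at hP
  have k1 : (((M + 1 : ℕ) : ℤ) + 1).toNat = M + 2 := by omega
  have k2 : (((M + 1 : ℕ) : ℤ) + 1 - 1).toNat = M + 1 := by omega
  have hE : ∀ jj, Edet n ζ a i jj (((M + 1 : ℕ) : ℤ) + 1) =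
      Matrix.det (consM c (fun (r : Fin (M+1)) (s : Fin (M+2)) =>
        if (s : ℕ) = 0 then alphaM n ζ a (jj - 1 + ((r : ℕ) : ℤ))
        else Imom n ζ a (jj + ((r : ℕ) : ℤ)) (i + (((s : ℕ) - 1 : ℕ) : ℤ)))) := by
    intro jj
    unfold Edet
    rw [if_neg (by omega), k1, ← Matrix.det_transpose]
    congr 1
    ext r s
    refine Fin.cases ?_ (fun r => ?_) r
    · by_cases hs : (s : ℕ) = 0 <;> simp [c, hs, consM_zero]
    · by_cases hs : (s : ℕ) = 0 <;> simp [hs, consM_succ, Imom_symm_aux n ζ a (jj + _)]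
  have hF : ∀ jj, Fdet n ζ a i jj (((M + 1 : ℕ) : ℤ) + 1 - 1) =
      Matrix.det (Matrix.of fun (r s : Fin (M+1)) =>
        Imom n ζ a (jj + ((r : ℕ) : ℤ)) (i + ((s : ℕ) : ℤ))) := by
    intro jj
    unfold Fdet
    rw [if_neg (by omega), k2, ← Matrix.det_transpose]
    congr 1
    ext r s
    simp [Imom_symm_aux n ζ a (jj + _)]
  have hG : Gdet n ζ a j i (((M + 1 : ℕ) : ℤ) + 1) = Matrix.det (Matrix.of v) := by
    unfold Gdet
    rw [if_neg (by omega), k1]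
  have hG2 : Gdet n ζ a i (j + 1) (((M + 1 : ℕ) : ℤ) + 1 - 1) =
      Matrix.det (Matrix.of fun r s : Fin (M+1) =>
        (consM c (fun s : Fin (M+1) => v s.succ)) r.castSucc s.succ) := by
    unfold Gdet
    rw [if_neg (by omega), k2, ← Matrix.det_transpose]
    congr 1
    ext r s
    refine Fin.cases ?_ (fun r => ?_) r
    · simp [c, consM_zero]
    · simp [v, consM_succ, Fin.castSucc_succ, Imom_symm_aux n ζ a (j + _), add_assoc, add_comm (1 : ℤ)]
  have sh : ∀ r : ℕ, j + 1 - 1 + (r : ℤ) = j - 1 + ((r + 1 : ℕ) : ℤ) := by intro r; push_cast; ring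
  have sh2 : ∀ r : ℕ, j + 1 + (r : ℤ) = j + ((r + 1 : ℕ) : ℤ) := by intro r; push_cast; ring
  rw [hE, hE, hF, hF, hG, hG2]
  simp only [sh, sh2]
  have hs : ((-1 : ℝ) ^ (M+1)) * (-1) ^ (M+1) = 1 := by
    rw [← pow_add, Even.neg_one_pow ⟨M+1, rfl⟩]
  refine Eq.trans hP ?_
  rw [add_comm, mul_mul_mul_comm, hs, one_mul, mul_comm (Matrix.det (Matrix.of v))]
  congr 1
  rw [mul_comm]
  rfl
end

section
/- For all integers i, j and every integer k ≥ 1, the bimoment determinants satisfy the bilinear identity G_{k+1}^{(i,j)} G_{k−1}^{(i+1,j+1)} = G_k^{(i,j)} G_k^{(i+1,j+1)} − G_k^{(i,j+1)} G_k^{(i+1,j)}. -/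
open Finset

open Matrix in
lemma det_two_col {N : Type*} [Fintype N] [DecidableEq N] {R : Type*} [CommRing R]
    (p q : N) (hpq : p ≠ q) (u v : N → R) :
    (((1 : Matrix N N R).updateCol p u).updateCol q v).det = u p * v q - u q * v p := by
  have h : ((1 : Matrix N N R).updateCol p u).updateCol q v =
      1 + (Matrix.of fun x (t : Fin 2) => if t = 0 then u x - (1 : Matrix N N R) x p
            else v x - (1 : Matrix N N R) x q) *
        (Matrix.of fun (t : Fin 2) y => if t = 0 then (1 : Matrix N N R) p y
            else (1 : Matrix N N R) q y) := by
    ext x y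
    simp only [Matrix.updateCol_apply, Matrix.add_apply, Matrix.mul_apply, Fin.sum_univ_two,
      Matrix.of_apply, Matrix.one_apply]
    by_cases h1 : y = q
    · subst h1
      simp [hpq]
    · by_cases h2 : y = p
      · subst h2
        simp [hpq, Ne.symm hpq]
      · simp [h1, h2, Ne.symm h1, Ne.symm h2]
  rw [h, Matrix.det_one_add_mul_comm, Matrix.det_fin_two]
  simp [Matrix.mul_apply, Matrix.one_apply, hpq, Ne.symm hpq, mul_sub, sub_mul]
  ring

lemma jacobi_aux {N : Type*} [Fintype N] [DecidableEq N] {R : Type*} [CommRing R]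
    (A : Matrix N N R) (p q r s : N) (hpq : p ≠ q) :
    A.det * (A.adjugate p r * A.adjugate q s - A.adjugate q r * A.adjugate p s) =
      A.det * (A.det * ((A.updateCol p (Pi.single r 1)).updateCol q (Pi.single s 1)).det) := by
  have hB := det_two_col p q hpq (fun x => A.adjugate x r) (fun x => A.adjugate x s)
  have hm : A * (((1 : Matrix N N R).updateCol p (fun x => A.adjugate x r)).updateCol q
      (fun x => A.adjugate x s)) =
      (A.updateCol p (A.det • Pi.single r 1)).updateCol q (A.det • Pi.single s 1) := by
    have key : ∀ x t, ∑ y, A x y * A.adjugate y t = A.det * (1 : Matrix N N R) x t := by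
      intro x t
      have := congrFun (congrFun (Matrix.mul_adjugate A) x) t
      simpa [Matrix.mul_apply] using this
    ext x y
    by_cases h1 : y = q
    · subst h1
      simp [Matrix.mul_apply, key, Matrix.one_apply, Pi.single_apply]
    · by_cases h2 : y = p
      · subst h2
        simp [Matrix.mul_apply, key, Matrix.one_apply, Pi.single_apply, h1, Matrix.updateCol_apply]
      · simp [Matrix.mul_apply, Matrix.one_apply, h1, h2, Matrix.updateCol_apply]
  rw [← hB, ← Matrix.det_mul, hm, Matrix.det_updateCol_smul, Matrix.updateCol_comm _ hpq,
    Matrix.det_updateCol_smul, Matrix.updateCol_comm _ hpq.symm]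

lemma jacobi_id {N : Type*} [Fintype N] [DecidableEq N] {R : Type*} [CommRing R]
    (A : Matrix N N R) (p q r s : N) (hpq : p ≠ q) :
    A.adjugate p r * A.adjugate q s - A.adjugate q r * A.adjugate p s =
      A.det * ((A.updateCol p (Pi.single r 1)).updateCol q (Pi.single s 1)).det := by
  have h := mul_left_cancel₀ (Matrix.det_mvPolynomialX_ne_zero N ℤ)
    (jacobi_aux (Matrix.mvPolynomialX N N ℤ) p q r s hpq)
  let f : MvPolynomial (N × N) ℤ →+* R := MvPolynomial.eval₂Hom (Int.castRingHom R) fun z => A z.1 z.2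
  have hf : f.mapMatrix (Matrix.mvPolynomialX N N ℤ) = A := by
    ext x y
    simp [f, Matrix.mvPolynomialX]
  have hadj : ∀ x y, f ((Matrix.mvPolynomialX N N ℤ).adjugate x y) = A.adjugate x y := by
    intro x y
    have := RingHom.map_adjugate f (Matrix.mvPolynomialX N N ℤ)
    rw [hf] at this
    rw [← this]; rfl
  have h' := congrArg f h
  simp only [map_sub, map_mul, hadj, RingHom.map_det, hf] at h'
  rw [h']
  congr 2
  rw [← hf]
  ext x y
  simp only [RingHom.mapMatrix_apply, Matrix.map_apply, Matrix.updateCol_apply, Pi.single_apply]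
  split_ifs <;> simp

lemma det_updateCol_single {m : ℕ} {R : Type*} [CommRing R]
    (A : Matrix (Fin (m+1)) (Fin (m+1)) R) (p r : Fin (m+1)) :
    (A.updateCol p (Pi.single r 1)).det =
      (-1) ^ (r + p : ℕ) * (A.submatrix r.succAbove p.succAbove).det := by
  rw [← Matrix.adjugate_fin_succ_eq_det_submatrix, ← Matrix.cramer_apply,
    Matrix.cramer_eq_adjugate_mulVec]
  simp

lemma desnanot {l : ℕ} {R : Type*} [CommRing R] (A : Matrix (Fin (l+3)) (Fin (l+3)) R) :
    A.det * (A.submatrix (fun x : Fin (l+1) => x.succ.castSucc)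
        (fun x : Fin (l+1) => ((1 : Fin (l+2)).succAbove x).castSucc)).det =
      (A.submatrix Fin.castSucc Fin.castSucc).det *
        (A.submatrix Fin.succ (Fin.succAbove 1)).det -
      (A.submatrix Fin.castSucc (Fin.succAbove 1)).det *
        (A.submatrix Fin.succ Fin.castSucc).det := by
  have h1 : (1 : Fin (l+3)) ≠ Fin.last (l+2) := by
    simp [Fin.ext_iff]
  have h := jacobi_id A 1 (Fin.last (l+2)) 0 (Fin.last (l+2)) h1
  rw [det_updateCol_single] at h
  have e : ((A.updateCol 1 (Pi.single 0 1)).submatrix (Fin.last (l+2)).succAbove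
      (Fin.last (l+2)).succAbove) =
      (A.submatrix Fin.castSucc Fin.castSucc).updateCol 1 (Pi.single 0 1) := by
    ext x y
    have hc : y.castSucc = 1 ↔ y = 1 := by
      rw [Fin.ext_iff, Fin.ext_iff]; rfl
    have hd : x.castSucc = 0 ↔ x = 0 := by
      rw [Fin.ext_iff, Fin.ext_iff]; rfl
    simp only [Matrix.submatrix_apply, Matrix.updateCol_apply, Fin.succAbove_last, Pi.single_apply,
      hc, hd]
  rw [e, det_updateCol_single] at h
  simp only [Matrix.adjugate_fin_succ_eq_det_submatrix, Fin.succAbove_last, Fin.succAbove_zero,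
    Matrix.submatrix_submatrix] at h
  have s1 : ((-1 : R)) ^ (l + 2 + (l + 2)) = 1 := Even.neg_one_pow ⟨_, rfl⟩
  have s2 : ((-1 : R)) ^ (l + 2) * (-1) ^ (l + 2) = 1 := by rw [← pow_add, s1]
  simp only [Fin.val_zero, Fin.val_last, Fin.val_one, s1, zero_add, pow_one, pow_add] at h
  have e2 : A.submatrix (fun x : Fin (l+1) => x.succ.castSucc)
        (fun x : Fin (l+1) => ((1 : Fin (l+2)).succAbove x).castSucc) =
      A.submatrix (Fin.castSucc ∘ Fin.succ) (Fin.castSucc ∘ Fin.succAbove 1) := rfl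
  rw [e2]
  set a1 := (A.submatrix Fin.castSucc Fin.castSucc).det
  set a2 := (A.submatrix Fin.succ (Fin.succAbove 1)).det
  set a3 := (A.submatrix Fin.castSucc (Fin.succAbove 1)).det
  set a4 := (A.submatrix Fin.succ Fin.castSucc).det
  set a5 := (A.submatrix (Fin.castSucc ∘ Fin.succ) (Fin.castSucc ∘ Fin.succAbove 1)).det
  set a6 := A.det
  have s3 : ((-1 : R)) ^ l * (-1) ^ l = 1 := by rw [← mul_pow]; simp
  linear_combination h - a3 * a4 * s3

lemma Gdet_nat (n : ℕ) (ζ a : Fin n → ℝ) (i j : ℤ) (m : ℕ) (k : ℤ) (hk : k = m + 1) :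
    Gdet n ζ a i j k = Matrix.det (Matrix.of fun r s : Fin (m + 1) =>
    if (s : ℕ) = 0 then alphaM n ζ a (i - 1 + ((r : ℕ) : ℤ))
    else Imom n ζ a (i + ((r : ℕ) : ℤ)) (j + (((s : ℕ) - 1 : ℕ) : ℤ))) := by
  have h : k = ((m + 1 : ℕ) : ℤ) := by push_cast; exact hk
  subst h
  have h2 : ¬ (((m + 1 : ℕ) : ℤ) < 1) := by push_cast; omega
  rw [Gdet, if_neg h2]
  rfl

/-- Lemma 2.8, identity (2.19): for all `i, j ∈ ℤ` and `k ≥ 1`,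
`G_{k+1}^{(i,j)} G_{k-1}^{(i+1,j+1)} = G_k^{(i,j)} G_k^{(i+1,j+1)} - G_k^{(i,j+1)} G_k^{(i+1,j)}`. -/
theorem stmt_10 (n : ℕ) (hn : 1 ≤ n) (ζ a : Fin n → ℝ)
    (hζ0 : ∀ p, 0 < ζ p) (hζmono : StrictMono ζ) (ha : ∀ p, 0 < a p)
    (i j k : ℤ) (hk : 1 ≤ k) :
    Gdet n ζ a i j (k + 1) * Gdet n ζ a (i + 1) (j + 1) (k - 1) =
      Gdet n ζ a i j k * Gdet n ζ a (i + 1) (j + 1) k -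
        Gdet n ζ a i (j + 1) k * Gdet n ζ a (i + 1) j k := by
  obtain ⟨m, rfl⟩ : ∃ m : ℕ, k = m + 1 := ⟨(k - 1).toNat, by omega⟩
  rcases m with _ | l
  · rw [Gdet_nat n ζ a i j 0 _ rfl, Gdet_nat n ζ a i (j+1) 0 _ rfl,
      Gdet_nat n ζ a (i+1) j 0 _ rfl, Gdet_nat n ζ a (i+1) (j+1) 0 _ rfl]
    simp [Gdet]
  · rw [Gdet_nat n ζ a i j (l+1) _ rfl, Gdet_nat n ζ a i (j+1) (l+1) _ rfl,
      Gdet_nat n ζ a (i+1) j (l+1) _ rfl, Gdet_nat n ζ a (i+1) (j+1) (l+1) _ rfl,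
      Gdet_nat n ζ a i j (l+2) _ (by push_cast; ring),
      Gdet_nat n ζ a (i+1) (j+1) l _ (by push_cast; ring)]
    have v : ∀ (t : ℕ) (y : Fin (t+1)), (((1 : Fin (t+2)).succAbove y : Fin (t+2)) : ℕ) =
        if (y : ℕ) = 0 then 0 else (y : ℕ) + 1 := by
      intro t y
      simp only [Fin.succAbove, Fin.lt_def, Fin.val_castSucc, Fin.val_one]
      by_cases hy : (y : ℕ) = 0
      · simp [hy]
      · rw [if_neg (by omega), if_neg hy, Fin.val_succ]
    have D := desnanot (Matrix.of fun r s : Fin (l + 3) =>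
      if (s : ℕ) = 0 then alphaM n ζ a (i - 1 + ((r : ℕ) : ℤ))
      else Imom n ζ a (i + ((r : ℕ) : ℤ)) (j + (((s : ℕ) - 1 : ℕ) : ℤ)))
    convert D using 3
    all_goals
      try refine congrArg (Matrix.det (R := ℝ)) ?_
      ext x y
      simp only [Matrix.submatrix_apply, Matrix.of_apply, Fin.val_castSucc, v, Fin.val_succ]
      try rfl
    all_goals
      by_cases hy : (y : ℕ) = 0
      · simp only [hy, if_true]
        try (congr 1; push_cast; ring)
      · simp only [hy, if_false, Nat.add_eq_zero_iff, false_and]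
        try (congr 1 <;> (push_cast; omega))
end

section
/- Under the time evolution a_p(t) = a_p(0) e^{t/ζ_p}, for all integers i, j, every integer k ≥ 0 and every t ∈ ℝ, the bimoment determinant F_k^{(i,j)}(t) is differentiable in t and (d/dt) F_k^{(i,j)}(t) = − E_{k+1}^{(i,j)}(t). -/
open Finset

/-- Time-dependent weights `a_p(t) = a_p(0) e^{t/ζ_p}`. -/
noncomputable def aT (n : ℕ) (ζ a0 : Fin n → ℝ) (t : ℝ) : Fin n → ℝ :=
  fun p => a0 p * Real.exp (t / ζ p)


theorem hasDerivAt_det_rows {m : ℕ} (M : ℝ → Matrix (Fin m) (Fin m) ℝ)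
    (u v : Fin m → ℝ) (t : ℝ)
    (h : ∀ r s, HasDerivAt (fun x => M x r s) (u r * v s) t) :
    HasDerivAt (fun x => (M x).det) (∑ r, u r * ((M t).updateRow r v).det) t := by
  let D : ContinuousMultilinearMap ℝ (fun _ : Fin m => Fin m → ℝ) ℝ :=
    { toMultilinearMap := (Matrix.detRowAlternating : (Fin m → ℝ) [⋀^Fin m]→ₗ[ℝ] ℝ).toMultilinearMap
      cont := by
        exact Continuous.matrix_det (A := fun x : Fin m → Fin m → ℝ => Matrix.of x) continuous_id }
  have hM : HasDerivAt (fun x => (fun r s => M x r s : Fin m → Fin m → ℝ))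
      (fun r s => u r * v s) t :=
    hasDerivAt_pi.2 fun r => hasDerivAt_pi.2 fun s => h r s
  have h2 := (D.hasFDerivAt (fun r s => M t r s)).comp_hasDerivAt t hM
  refine HasDerivAt.congr_deriv h2 ?_
  rw [ContinuousMultilinearMap.linearDeriv_apply]
  refine Finset.sum_congr rfl fun r _ => ?_
  rw [← Matrix.det_updateRow_smul]
  rfl

theorem det_border {m : ℕ} (B : Matrix (Fin (m + 1)) (Fin (m + 1)) ℝ)
    (M : Matrix (Fin m) (Fin m) ℝ) (u v : Fin m → ℝ)
    (h00 : B 0 0 = 0) (h0 : ∀ s : Fin m, B 0 s.succ = v s) (h1 : ∀ r : Fin m, B r.succ 0 = u r)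
    (h2 : ∀ r s : Fin m, B r.succ s.succ = M r s) :
    ∑ r, u r * (M.updateRow r v).det = -B.det := by
  rw [Matrix.det_succ_column_zero, Fin.sum_univ_succ, h00]
  simp only [mul_zero, zero_mul, zero_add]
  rw [← Finset.sum_neg_distrib]
  refine Finset.sum_congr rfl fun r _ => ?_
  rw [h1]
  cases m with
  | zero => exact r.elim0
  | succ m =>
    have key : B.submatrix r.succ.succAbove Fin.succ
        = (M.updateRow r v).submatrix r.cycleRange.symm id := by
      ext a b
      refine Fin.cases ?_ (fun a => ?_) a
      · simp [h0]
      · simp [h2, Fin.succAbove_ne, Matrix.updateRow_apply]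
    rw [key, Matrix.det_permute]
    simp only [Equiv.Perm.sign_symm, Fin.sign_cycleRange, Fin.val_succ]
    push_cast
    have : ((-1 : ℝ) ^ (r : ℕ)) * (-1) ^ (r : ℕ) = 1 := by
      rw [← mul_pow]; simp
    rw [pow_succ]
    linear_combination (-(u r * (M.updateRow r v).det)) * this

theorem hasDerivAt_Imom (n : ℕ) (ζ a0 : Fin n → ℝ) (hζ0 : ∀ p, 0 < ζ p) (i j : ℤ) (t : ℝ) :
    HasDerivAt (fun s => Imom n ζ (aT n ζ a0 s) i j)
      (alphaM n ζ (aT n ζ a0 t) (i - 1) * alphaM n ζ (aT n ζ a0 t) (j - 1)) t := by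
  have ha : ∀ p, HasDerivAt (fun s => aT n ζ a0 s p) (aT n ζ a0 t p / ζ p) t := by
    intro p
    unfold aT
    refine HasDerivAt.congr_deriv ((((hasDerivAt_id t).div_const (ζ p)).exp).const_mul (a0 p)) ?_
    simp only [id]
    ring
  unfold Imom alphaM
  rw [Finset.sum_mul_sum]
  refine HasDerivAt.fun_sum fun p _ => HasDerivAt.fun_sum fun q _ => ?_
  refine HasDerivAt.congr_deriv (((ha p).mul (ha q)).const_mul _) ?_
  have hp := (hζ0 p).ne'
  have hq := (hζ0 q).ne'
  have hpq : ζ p + ζ q ≠ 0 := (add_pos (hζ0 p) (hζ0 q)).ne'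
  rw [zpow_sub_one₀ hp, zpow_sub_one₀ hq]
  field_simp
  ring

/-- Lemma 2.10: under the evolution `a_p(t) = a_p(0) e^{t/ζ_p}`, for all `i, j ∈ ℤ`,
`k ≥ 0` and `t ∈ ℝ`, the function `t ↦ F_k^{(i,j)}(t)` is differentiable with
derivative `-E_{k+1}^{(i,j)}(t)`. -/
theorem stmt_12 (n : ℕ) (hn : 1 ≤ n) (ζ a0 : Fin n → ℝ)
    (hζ0 : ∀ p, 0 < ζ p) (hζmono : StrictMono ζ) (ha : ∀ p, 0 < a0 p)
    (i j k : ℤ) (hk : 0 ≤ k) (t : ℝ) :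
    HasDerivAt (fun s => Fdet n ζ (aT n ζ a0 s) i j k)
      (-(Edet n ζ (aT n ζ a0 t) i j (k + 1))) t := by
  obtain ⟨m, rfl⟩ := Int.eq_ofNat_of_zero_le hk
  have hF : ∀ s, Fdet n ζ (aT n ζ a0 s) i j (m : ℤ) = Matrix.det (Matrix.of fun r c : Fin m =>
      Imom n ζ (aT n ζ a0 s) (i + ((r : ℕ) : ℤ)) (j + ((c : ℕ) : ℤ))) := by
    intro s
    rw [Fdet, if_neg (by omega)]
    rfl
  simp only [hF]
  have hD := hasDerivAt_det_rows (fun s => Matrix.of fun r c : Fin m =>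
      Imom n ζ (aT n ζ a0 s) (i + ((r : ℕ) : ℤ)) (j + ((c : ℕ) : ℤ)))
    (fun r => alphaM n ζ (aT n ζ a0 t) (i + ((r : ℕ) : ℤ) - 1))
    (fun c => alphaM n ζ (aT n ζ a0 t) (j + ((c : ℕ) : ℤ) - 1)) t
    (fun r c => hasDerivAt_Imom n ζ a0 hζ0 _ _ t)
  refine HasDerivAt.congr_deriv hD ?_
  by_cases hm : m = 0
  · subst hm
    simp [Edet]
  · rw [Edet, if_neg (by omega)]
    refine det_border (m := m) _ _ _ _ ?_ ?_ ?_ ?_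
    · simp
    · intro s
      simp [add_sub_right_comm]
    · intro s
      simp [add_sub_right_comm]
    · intro r s
      simp
end

section
/- For all integers i, j and every integer k ≥ 1, the determinants built from the moments J and β satisfy the two bilinear identities: ρ_{k+1}^{(i,j)} τ_{k−1}^{(i,j)} = τ_k^{(i,j)} ρ_k^{(i,j)} − σ_k^{(i,j)} σ_k^{(j,i)}, and σ_k^{(j,i)} σ_{k−1}^{(i,j)} = ν_k^{(i,j)} τ_{k−1}^{(i,j)} − ρ_k^{(i,j)} ω_{k−1}^{(i,j)}. -/
open Finset

/-- Single moments `β_i = Σ_p ξ_p^i c_p`. -/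
noncomputable def betaM (n : ℕ) (ξ c : Fin n → ℝ) (i : ℤ) : ℝ :=
  ∑ p : Fin n, ξ p ^ i * c p

/-- Bimoments `J_{i,j} = Σ_p Σ_q ξ_p^i ξ_q^j / (ξ_p + ξ_q) c_p c_q`. -/
noncomputable def Jmom (n : ℕ) (ξ c : Fin n → ℝ) (i j : ℤ) : ℝ :=
  ∑ p : Fin n, ∑ q : Fin n, ξ p ^ i * ξ q ^ j / (ξ p + ξ q) * (c p * c q)

/-- `τ_k^{(i,j)} = det (J_{i+r,j+s})_{0 ≤ r,s ≤ k-1}`, with `τ_0 = 1` and `τ_k = 0` for `k < 0`. -/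
noncomputable def tauDet (n : ℕ) (ξ c : Fin n → ℝ) (i j k : ℤ) : ℝ :=
  if k < 0 then 0
  else Matrix.det (Matrix.of fun r s : Fin k.toNat =>
    Jmom n ξ c (i + ((r : ℕ) : ℤ)) (j + ((s : ℕ) : ℤ)))

/-- `σ_k^{(i,j)}`: first column `(β_i, …, β_{i+k-1})ᵀ`, remaining block
`(J_{i+r,j+s})_{0 ≤ r ≤ k-1, 0 ≤ s ≤ k-2}`; `σ_1 = β_i` and `σ_k = 0` for `k < 1`. -/
noncomputable def sigmaDet (n : ℕ) (ξ c : Fin n → ℝ) (i j k : ℤ) : ℝ :=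
  if k < 1 then 0
  else Matrix.det (Matrix.of fun r s : Fin k.toNat =>
    if (s : ℕ) = 0 then betaM n ξ c (i + ((r : ℕ) : ℤ))
    else Jmom n ξ c (i + ((r : ℕ) : ℤ)) (j + (((s : ℕ) - 1 : ℕ) : ℤ)))

/-- `ρ_k^{(i,j)}`: `(1,1)` entry `0`, first row `(0, β_j, …, β_{j+k-2})`, first column
`(0, β_i, …, β_{i+k-2})ᵀ`, remaining block `(J_{i+r,j+s})_{0 ≤ r,s ≤ k-2}`;
`ρ_k = 0` for `k < 2`. -/
noncomputable def rhoDet (n : ℕ) (ξ c : Fin n → ℝ) (i j k : ℤ) : ℝ :=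
  if k < 2 then 0
  else Matrix.det (Matrix.of fun r s : Fin k.toNat =>
    if (r : ℕ) = 0 then
      (if (s : ℕ) = 0 then 0 else betaM n ξ c (j + (((s : ℕ) - 1 : ℕ) : ℤ)))
    else if (s : ℕ) = 0 then betaM n ξ c (i + (((r : ℕ) - 1 : ℕ) : ℤ))
    else Jmom n ξ c (i + (((r : ℕ) - 1 : ℕ) : ℤ)) (j + (((s : ℕ) - 1 : ℕ) : ℤ)))

/-- `ω_k^{(i,j)}`: the `k×k` determinant with rows indexed by `i, …, i+k-1` and columns
`J_{·,j}, …, J_{·,j+k-2}, J_{·,j+k}` (the last column index jumps an extra step);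
`ω_1 = J_{i,j+1}` and `ω_k = 0` for `k < 1`. -/
noncomputable def omegaDet (n : ℕ) (ξ c : Fin n → ℝ) (i j k : ℤ) : ℝ :=
  if k < 1 then 0
  else Matrix.det (Matrix.of fun r s : Fin k.toNat =>
    Jmom n ξ c (i + ((r : ℕ) : ℤ))
      (j + (if (s : ℕ) = k.toNat - 1 then ((s : ℕ) : ℤ) + 1 else ((s : ℕ) : ℤ))))

/-- `ν_k^{(i,j)}`: like `ρ_k^{(i,j)}` but with the last column index jumping an extra step,
i.e. first row `(0, β_j, …, β_{j+k-3}, β_{j+k-1})` and last `J`-column `(J_{i+r,j+k-1})_r`;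
`ν_k = 0` for `k < 2`. -/
noncomputable def nuDet (n : ℕ) (ξ c : Fin n → ℝ) (i j k : ℤ) : ℝ :=
  if k < 2 then 0
  else Matrix.det (Matrix.of fun r s : Fin k.toNat =>
    if (r : ℕ) = 0 then
      (if (s : ℕ) = 0 then 0
       else betaM n ξ c
         (j + (if (s : ℕ) = k.toNat - 1 then ((s : ℕ) : ℤ) else ((s : ℕ) : ℤ) - 1)))
    else if (s : ℕ) = 0 then betaM n ξ c (i + (((r : ℕ) - 1 : ℕ) : ℤ))
    else Jmom n ξ c (i + (((r : ℕ) - 1 : ℕ) : ℤ))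
      (j + (if (s : ℕ) = k.toNat - 1 then ((s : ℕ) : ℤ) else ((s : ℕ) : ℤ) - 1)))

namespace Aux

open Matrix

/-- Determinant of the identity matrix with two columns replaced. -/
lemma det_one_update {n : ℕ} {R : Type*} [CommRing R] (p q : Fin n) (hpq : p ≠ q)
    (u v : Fin n → R) :
    (((1 : Matrix (Fin n) (Fin n) R).updateCol p u).updateCol q v).det
      = u p * v q - v p * u q := by
  have h : ((1 : Matrix (Fin n) (Fin n) R).updateCol p u).updateCol q v
      = 1 + (Matrix.of fun (r : Fin n) (s : Fin 2) =>
          if s = 0 then u r - (1 : Matrix (Fin n) (Fin n) R) r p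
            else v r - (1 : Matrix (Fin n) (Fin n) R) r q)
        * (Matrix.of fun (s : Fin 2) (t : Fin n) =>
          if s = 0 then (1 : Matrix (Fin n) (Fin n) R) p t
            else (1 : Matrix (Fin n) (Fin n) R) q t) := by
    ext r t
    simp only [Matrix.add_apply, Matrix.mul_apply, Fin.sum_univ_two, Matrix.updateCol_apply]
    by_cases h1 : t = q
    · subst h1
      simp [Matrix.one_apply, hpq]
    · by_cases h2 : t = p
      · subst h2
        simp [Matrix.one_apply, hpq, hpq.symm]
      · simp [h1, h2, Matrix.one_apply, Ne.symm h1, Ne.symm h2, eq_comm]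
  rw [h, Matrix.det_one_add_mul_comm, Matrix.det_fin_two]
  simp [Matrix.mul_apply, Matrix.one_apply, hpq, hpq.symm]

lemma plucker_mul {n : ℕ} {R : Type*} [CommRing R] (M : Matrix (Fin n) (Fin n) R)
    (p q : Fin n) (hpq : p ≠ q) (c d : Fin n → R) :
    M.det * (M.det * ((M.updateCol p c).updateCol q d).det) =
      M.det * ((M.updateCol p c).det * (M.updateCol q d).det
        - (M.updateCol p d).det * (M.updateCol q c).det) := by
  have key : M * ((1 : Matrix (Fin n) (Fin n) R).updateCol p (M.cramer c)).updateCol q (M.cramer d)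
      = (M.updateCol p (M.det • c)).updateCol q (M.det • d) := by
    ext r t
    have hc := congrFun (Matrix.mulVec_cramer M c) r
    have hd := congrFun (Matrix.mulVec_cramer M d) r
    by_cases h1 : t = q
    · subst h1
      simpa [Matrix.mul_apply, Matrix.mulVec, dotProduct] using hd
    · by_cases h2 : t = p
      · subst h2
        simpa [Matrix.mul_apply, Matrix.mulVec, dotProduct, h1, Matrix.updateCol_apply] using hc
      · simp [Matrix.mul_apply, h1, h2, Matrix.updateCol_apply, Matrix.one_apply]
  have h := congrArg Matrix.det key
  rw [Matrix.det_mul, det_one_update p q hpq, Matrix.det_updateCol_smul,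
    Matrix.updateCol_comm _ hpq, Matrix.det_updateCol_smul, Matrix.updateCol_comm _ hpq.symm] at h
  simp only [Matrix.cramer_apply] at h
  linear_combination -h

/-- The three term Pluecker relation. -/
lemma plucker {n : ℕ} (M : Matrix (Fin n) (Fin n) ℝ)
    (p q : Fin n) (hpq : p ≠ q) (c d : Fin n → ℝ) :
    M.det * ((M.updateCol p c).updateCol q d).det =
      (M.updateCol p c).det * (M.updateCol q d).det
        - (M.updateCol p d).det * (M.updateCol q c).det := by
  have h := mul_left_cancel₀ (Matrix.det_mvPolynomialX_ne_zero (Fin n) ℝ)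
    (plucker_mul (Matrix.mvPolynomialX (Fin n) (Fin n) ℝ) p q hpq
      (fun r => MvPolynomial.C (c r)) (fun r => MvPolynomial.C (d r)))
  have h2 := congrArg (MvPolynomial.eval fun x : Fin n × Fin n => M x.1 x.2) h
  have e : ((MvPolynomial.eval fun x : Fin n × Fin n => M x.1 x.2)).mapMatrix
      (Matrix.mvPolynomialX (Fin n) (Fin n) ℝ) = M := Matrix.mvPolynomialX_mapMatrix_eval M
  have e' : (Matrix.mvPolynomialX (Fin n) (Fin n) ℝ).map
      ⇑(MvPolynomial.eval fun x : Fin n × Fin n => M x.1 x.2) = M := e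
  simp only [map_mul, map_sub, RingHom.map_det, RingHom.mapMatrix_apply, Matrix.map_updateCol,
    e'] at h2
  have hc : ∀ c : Fin n → ℝ, (⇑(MvPolynomial.eval fun x : Fin n × Fin n => M x.1 x.2) ∘
      fun r => (MvPolynomial.C (c r) : MvPolynomial (Fin n × Fin n) ℝ)) = c := by
    intro c; ext r; simp
  simpa only [hc] using h2

lemma det_updateCol_single {n : ℕ} (M : Matrix (Fin (n+1)) (Fin (n+1)) ℝ) (p r : Fin (n+1)) :
    (M.updateCol p (Pi.single r 1)).det
      = (-1) ^ (r + p : ℕ) * (M.submatrix r.succAbove p.succAbove).det := by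
  rw [← Matrix.adjugate_fin_succ_eq_det_submatrix, ← Matrix.cramer_apply,
    Matrix.cramer_eq_adjugate_mulVec]
  simp

/-- Desnanot-Jacobi. -/
lemma dodgson {m : ℕ} (M : Matrix (Fin (m+2)) (Fin (m+2)) ℝ) :
    M.det * (M.submatrix (fun r : Fin m => r.castSucc.succ) (fun r : Fin m => r.castSucc.succ)).det
     = (M.submatrix Fin.succ Fin.succ).det * (M.submatrix Fin.castSucc Fin.castSucc).det
      - (M.submatrix Fin.succ Fin.castSucc).det * (M.submatrix Fin.castSucc Fin.succ).det := by
  have h := plucker M 0 (Fin.last _) (by simp [Fin.ext_iff]) (Pi.single 0 1)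
    (Pi.single (Fin.last _) 1)
  rw [det_updateCol_single, det_updateCol_single, det_updateCol_single, det_updateCol_single,
    det_updateCol_single] at h
  have e : (M.updateCol 0 (Pi.single 0 1)).submatrix (Fin.last (m+1)).succAbove
      (Fin.last (m+1)).succAbove
      = (M.submatrix Fin.castSucc Fin.castSucc).updateCol 0 (Pi.single 0 1) := by
    ext r s
    simp [Matrix.updateCol_apply, Pi.single_apply]
  rw [e, det_updateCol_single] at h
  have hs : ((-1:ℝ)) ^ (m+1) * (-1) ^ (m+1) = 1 := by
    rw [← mul_pow]; simp
  have hs2 : ((-1:ℝ)) ^ (m+1 + (m+1)) = 1 := by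
    rw [pow_add]; exact hs
  simp only [Fin.succAbove_last, Fin.succAbove_zero, Fin.val_last, Fin.val_zero, hs2, zero_add,
    add_zero, pow_zero, one_mul, Matrix.submatrix_submatrix, Fin.succAbove_zero] at h
  have e2 : (Fin.castSucc ∘ Fin.succ : Fin m → Fin (m+2)) = fun r => r.castSucc.succ := by
    ext r; simp
  rw [e2] at h
  rw [h]
  linear_combination (-(M.submatrix Fin.succ Fin.castSucc).det *
    (M.submatrix Fin.castSucc Fin.succ).det) * hs

/-- Second consequence of the Pluecker relation. -/
lemma second {m : ℕ} (M : Matrix (Fin (m+2)) (Fin (m+2)) ℝ) (w : Fin (m+2) → ℝ) :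
    (Matrix.of fun r (s : Fin (m+2)) =>
        if h : s = Fin.last _ then w r else M r (s + 1)).det
      * (M.submatrix Fin.succ Fin.castSucc).det
     = (M.updateCol (Fin.last _) w).det * (M.submatrix Fin.succ Fin.succ).det
      - M.det * ((M.updateCol (Fin.last _) w).submatrix Fin.succ Fin.succ).det := by
  have h := plucker M 0 (Fin.last _) (by simp [Fin.ext_iff]) (Pi.single 0 1) w
  rw [Matrix.updateCol_comm _ (by simp [Fin.ext_iff]), det_updateCol_single, det_updateCol_single,
    det_updateCol_single] at h
  have e : (Matrix.of fun r (s : Fin (m+2)) =>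
        if h : s = Fin.last _ then w r else M r (s + 1))
      = (M.updateCol 0 w).submatrix id (finRotate (m+2)) := by
    ext r s
    rcases Fin.eq_castSucc_or_eq_last s with ⟨s, rfl⟩ | rfl
    · have h1 : s.castSucc ≠ Fin.last (m+1) := (Fin.castSucc_lt_last s).ne
      have h2 : s.castSucc + 1 = s.succ := by simp
      simp only [Matrix.of_apply, h1, dite_false, Matrix.submatrix_apply, id, finRotate_succ_apply,
        h2, Matrix.updateCol_apply, Fin.succ_ne_zero, if_false]
    · simp
  have hs : ((-1:ℝ)) ^ (m+1) * (-1) ^ (m+1) = 1 := by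
    rw [← mul_pow]; simp
  rw [e, Matrix.det_permute', sign_finRotate]
  simp only [Fin.succAbove_last, Fin.succAbove_zero, Fin.val_last, Fin.val_zero, zero_add,
    add_zero, pow_zero, one_mul] at h
  push_cast
  linear_combination h

variable (n : ℕ) (ξ c : Fin n → ℝ) (i j : ℤ)

lemma J_symm (a b : ℤ) : Jmom n ξ c a b = Jmom n ξ c b a := by
  unfold Jmom
  rw [Finset.sum_comm]
  refine Finset.sum_congr rfl fun p _ => Finset.sum_congr rfl fun q _ => ?_
  rw [add_comm (ξ q), mul_comm (ξ q ^ a), mul_comm (c q)]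

/-- The bordered matrix. -/
noncomputable def rhoM (m : ℕ) : Matrix (Fin m) (Fin m) ℝ := Matrix.of fun r s : Fin m =>
    if (r : ℕ) = 0 then
      (if (s : ℕ) = 0 then 0 else betaM n ξ c (j + (((s : ℕ) - 1 : ℕ) : ℤ)))
    else if (s : ℕ) = 0 then betaM n ξ c (i + (((r : ℕ) - 1 : ℕ) : ℤ))
    else Jmom n ξ c (i + (((r : ℕ) - 1 : ℕ) : ℤ)) (j + (((s : ℕ) - 1 : ℕ) : ℤ))

lemma rho_eq (m : ℕ) : rhoDet n ξ c i j ((m + 1 : ℕ) : ℤ) = (rhoM n ξ c i j (m+1)).det := by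
  unfold rhoDet
  split_ifs with h
  · have : m = 0 := by push_cast at h; lia
    subst this
    simp [rhoM]
  · rfl

lemma tau_eq (m : ℕ) : tauDet n ξ c i j ((m : ℕ) : ℤ) = Matrix.det (Matrix.of fun r s : Fin m =>
    Jmom n ξ c (i + ((r : ℕ) : ℤ)) (j + ((s : ℕ) : ℤ))) := by
  unfold tauDet
  rw [if_neg (by lia)]
  rfl

lemma sigma_eq (m : ℕ) : sigmaDet n ξ c i j ((m + 1 : ℕ) : ℤ) =
    Matrix.det (Matrix.of fun r s : Fin (m+1) =>
    if (s : ℕ) = 0 then betaM n ξ c (i + ((r : ℕ) : ℤ))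
    else Jmom n ξ c (i + ((r : ℕ) : ℤ)) (j + (((s : ℕ) - 1 : ℕ) : ℤ))) := by
  unfold sigmaDet
  rw [if_neg (by push_cast; lia)]
  rfl

lemma omega_eq (m : ℕ) : omegaDet n ξ c i j ((m + 1 : ℕ) : ℤ) =
    Matrix.det (Matrix.of fun r s : Fin (m+1) =>
    Jmom n ξ c (i + ((r : ℕ) : ℤ))
      (j + (if (s : ℕ) = m then ((s : ℕ) : ℤ) + 1 else ((s : ℕ) : ℤ)))) := by
  unfold omegaDet
  rw [if_neg (by push_cast; lia)]
  rfl

lemma nu_eq (m : ℕ) : nuDet n ξ c i j ((m + 2 : ℕ) : ℤ) =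
    Matrix.det (Matrix.of fun r s : Fin (m+2) =>
    if (r : ℕ) = 0 then
      (if (s : ℕ) = 0 then 0
       else betaM n ξ c
         (j + (if (s : ℕ) = m+1 then ((s : ℕ) : ℤ) else ((s : ℕ) : ℤ) - 1)))
    else if (s : ℕ) = 0 then betaM n ξ c (i + (((r : ℕ) - 1 : ℕ) : ℤ))
    else Jmom n ξ c (i + (((r : ℕ) - 1 : ℕ) : ℤ))
      (j + (if (s : ℕ) = m+1 then ((s : ℕ) : ℤ) else ((s : ℕ) : ℤ) - 1))) := by
  unfold nuDet
  rw [if_neg (by push_cast; lia)]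
  rfl

lemma first_id (m : ℕ) :
    rhoDet n ξ c i j ((m + 2 : ℕ) : ℤ) * tauDet n ξ c i j ((m : ℕ) : ℤ) =
      tauDet n ξ c i j ((m + 1 : ℕ) : ℤ) * rhoDet n ξ c i j ((m + 1 : ℕ) : ℤ) -
        sigmaDet n ξ c i j ((m + 1 : ℕ) : ℤ) * sigmaDet n ξ c j i ((m + 1 : ℕ) : ℤ) := by
  rw [rho_eq, rho_eq, tau_eq, tau_eq, sigma_eq, sigma_eq]
  have h := dodgson (rhoM n ξ c i j (m+2))
  rw [← Matrix.det_transpose ((rhoM n ξ c i j (m+2)).submatrix Fin.castSucc Fin.succ)] at h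
  convert h using 3
  · ext r s; simp [rhoM]
  · congr 1 <;> (ext r s; simp [rhoM])
  · congr 1
  · congr 1 <;> (ext r s; simp [rhoM])
  · congr 1; ext r s
    simp [rhoM, J_symm n ξ c (j + _)]

lemma second_id (m : ℕ) :
    sigmaDet n ξ c j i ((m + 2 : ℕ) : ℤ) * sigmaDet n ξ c i j ((m + 1 : ℕ) : ℤ) =
      nuDet n ξ c i j ((m + 2 : ℕ) : ℤ) * tauDet n ξ c i j ((m + 1 : ℕ) : ℤ) -
        rhoDet n ξ c i j ((m + 2 : ℕ) : ℤ) * omegaDet n ξ c i j ((m + 1 : ℕ) : ℤ) := by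
  rw [rho_eq, tau_eq, sigma_eq, sigma_eq, omega_eq, nu_eq]
  have h := second (rhoM n ξ c i j (m+2)) (fun r => if (r : ℕ) = 0 then
    betaM n ξ c (j + ((m + 1 : ℕ) : ℤ))
    else Jmom n ξ c (i + (((r : ℕ) - 1 : ℕ) : ℤ)) (j + ((m + 1 : ℕ) : ℤ)))
  rw [← Matrix.det_transpose] at h
  convert h using 3
  · ext r s
    rcases Fin.eq_castSucc_or_eq_last r with ⟨r, rfl⟩ | rfl
    · simp [rhoM, (Fin.castSucc_lt_last r).ne, J_symm n ξ c (j + _)]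
    · simp [J_symm n ξ c (j + _)]
  · congr 1 <;> (ext r s; simp [rhoM])
  · congr 1; ext r s
    rcases Fin.eq_castSucc_or_eq_last s with ⟨s, rfl⟩ | rfl
    · by_cases hs : (s : ℕ) = 0
      · simp only [Matrix.of_apply, rhoM, Matrix.updateCol_apply, (Fin.castSucc_lt_last s).ne, Fin.val_castSucc, hs, if_true, if_false]
      · have : (((s : ℕ) - 1 : ℕ) : ℤ) = (s : ℤ) - 1 := by lia
        simp [rhoM, Matrix.updateCol_apply, (Fin.castSucc_lt_last s).ne, s.isLt.ne, hs, this]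
    · simp
  · congr 1 <;> (ext r s; simp [rhoM])
  · congr 1; ext r s
    rcases Fin.eq_castSucc_or_eq_last s with ⟨s, rfl⟩ | rfl
    · simp [rhoM, Matrix.updateCol_apply, (Fin.castSucc_lt_last s).ne, s.isLt.ne]
    · simp

end Aux

/-- Lemma 3.1: for all `i, j ∈ ℤ` and `k ≥ 1`,
`ρ_{k+1}^{(i,j)} τ_{k-1}^{(i,j)} = τ_k^{(i,j)} ρ_k^{(i,j)} - σ_k^{(i,j)} σ_k^{(j,i)}` and
`σ_k^{(j,i)} σ_{k-1}^{(i,j)} = ν_k^{(i,j)} τ_{k-1}^{(i,j)} - ρ_k^{(i,j)} ω_{k-1}^{(i,j)}`. -/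
theorem stmt_14 (n : ℕ) (hn : 1 ≤ n) (ξ c : Fin n → ℝ)
    (hξ0 : ∀ p, 0 < ξ p) (hξmono : StrictMono ξ) (hc : ∀ p, 0 < c p)
    (i j k : ℤ) (hk : 1 ≤ k) :
    rhoDet n ξ c i j (k + 1) * tauDet n ξ c i j (k - 1) =
      tauDet n ξ c i j k * rhoDet n ξ c i j k -
        sigmaDet n ξ c i j k * sigmaDet n ξ c j i k ∧
    sigmaDet n ξ c j i k * sigmaDet n ξ c i j (k - 1) =
      nuDet n ξ c i j k * tauDet n ξ c i j (k - 1) -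
        rhoDet n ξ c i j k * omegaDet n ξ c i j (k - 1) := by
  obtain ⟨m, rfl⟩ : ∃ m : ℕ, k = ((m + 1 : ℕ) : ℤ) := ⟨(k - 1).toNat, by lia⟩
  have e1 : ((m + 1 : ℕ) : ℤ) + 1 = ((m + 2 : ℕ) : ℤ) := by lia
  have e2 : ((m + 1 : ℕ) : ℤ) - 1 = ((m : ℕ) : ℤ) := by lia
  rw [e1, e2]
  refine ⟨Aux.first_id n ξ c i j m, ?_⟩
  cases m with
  | zero => simp [sigmaDet, nuDet, rhoDet]
  | succ m => exact Aux.second_id n ξ c i j m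
end

section
/- Under the time evolution c_p(t) = c_p(0) e^{ξ_p t}, for all integers i, j, every integer k ≥ 0 and every t ∈ ℝ, the determinant τ_k^{(i,j)}(t) is twice differentiable in t and satisfies (d/dt) τ_k^{(i,j)}(t) = − ρ_{k+1}^{(i,j)}(t), (d/dt) τ_k^{(i,j)}(t) = ω_k^{(i,j)}(t) + ω_k^{(j,i)}(t), and (d²/dt²) τ_k^{(i,j)}(t) = − ν_{k+1}^{(i,j)}(t) − ν_{k+1}^{(j,i)}(t). -/
open Finset

/-- Time-dependent weights `c_p(t) = c_p(0) e^{ξ_p t}`. -/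
noncomputable def cT (n : ℕ) (ξ c0 : Fin n → ℝ) (t : ℝ) : Fin n → ℝ :=
  fun p => c0 p * Real.exp (ξ p * t)

lemma aux_det_deriv {m : ℕ} (A : ℝ → Matrix (Fin m) (Fin m) ℝ) (B : Matrix (Fin m) (Fin m) ℝ)
    (t : ℝ) (h : ∀ r s, HasDerivAt (fun x => A x r s) (B r s) t) :
    HasDerivAt (fun x => (A x).det) (∑ r, ((A t).updateRow r (B r)).det) t := by
  let f : ContinuousMultilinearMap ℝ (fun _ : Fin m => Fin m → ℝ) ℝ :=
    ⟨(Matrix.detRowAlternating (n := Fin m) (R := ℝ)).toMultilinearMap, by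
      exact Continuous.matrix_det (A := fun M : Matrix (Fin m) (Fin m) ℝ => M) continuous_id⟩
  have h2 : ∀ r, HasFDerivAt (fun x => A x r)
      (ContinuousLinearMap.toSpanSingleton ℝ (B r)) t := by
    intro r
    have : HasDerivAt (fun x => A x r) (B r) t := hasDerivAt_pi.2 (h r)
    exact this.hasFDerivAt
  have h3 := (HasFDerivAt.multilinear_comp f h2).hasDerivAt
  refine HasDerivAt.congr_deriv h3 ?_
  rw [_root_.sum_apply]
  refine Finset.sum_congr rfl fun r _ => ?_
  rw [ContinuousLinearMap.comp_apply, ContinuousLinearMap.toSpanSingleton_apply, one_smul]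
  rfl

lemma aux_transpose {m : ℕ} (A B : Matrix (Fin m) (Fin m) ℝ) :
    ∑ r, (A.updateRow r (B r)).det = ∑ r, (A.transpose.updateRow r (B.transpose r)).det := by
  have e : ∀ A B : Matrix (Fin m) (Fin m) ℝ,
      HasDerivAt (fun x : ℝ => (A + x • B).det) (∑ r, (A.updateRow r (B r)).det) 0 := by
    intro A B
    have := aux_det_deriv (fun x => A + x • B) B 0 (by
      intro r s
      simpa using ((hasDerivAt_id (0:ℝ)).mul_const (B r s)).const_add (A r s))
    simpa using this
  have h1 := e A B
  have h2 := e A.transpose B.transpose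
  have : (fun x : ℝ => (A.transpose + x • B.transpose).det) = fun x : ℝ => (A + x • B).det := by
    funext x
    rw [← Matrix.transpose_smul, ← Matrix.transpose_add, Matrix.det_transpose]
  rw [this] at h2
  exact h1.unique h2

/-- The bordered matrix. -/
def bordM {m : ℕ} (a : ℝ) (v u : Fin m → ℝ) (A : Matrix (Fin m) (Fin m) ℝ) :
    Matrix (Fin (m+1)) (Fin (m+1)) ℝ :=
  Matrix.of (Fin.cons (Fin.cons a v) (fun r => Fin.cons (u r) (A r)))

lemma aux_bord_one {m : ℕ} (v u : Fin m → ℝ) (A : Matrix (Fin m) (Fin m) ℝ) :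
    (bordM 1 v u A).det = (A - Matrix.of fun r s => u r * v s).det := by
  let e : Fin 1 ⊕ Fin m ≃ Fin (m+1) := finSumFinEquiv.trans (finCongr (add_comm 1 m))
  have e0 : ∀ x, e (Sum.inl x) = 0 := by
    intro x; ext; simp [e]
  have e1 : ∀ x, e (Sum.inr x) = x.succ := by
    intro x; ext; simp [e]
  rw [← Matrix.det_submatrix_equiv_self e]
  have : (bordM 1 v u A).submatrix e e = Matrix.fromBlocks 1 (Matrix.of fun _ s => v s)
      (Matrix.of fun r _ => u r) A := by
    ext (x | x) (y | y) <;> simp [e0, e1, bordM]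
    · rw [Subsingleton.elim x y]; simp
  rw [this, Matrix.det_fromBlocks_one₁₁]
  congr 2
  ext r s
  simp [Matrix.mul_apply]

lemma aux_bord_lin {m : ℕ} (x : ℝ) (v u : Fin m → ℝ) (A : Matrix (Fin m) (Fin m) ℝ) :
    (bordM 1 (-(x • v)) u A).det = A.det - x * (bordM 0 v u A).det := by
  have h : ∀ a w, bordM a w u A = (bordM 0 v u A).updateRow 0 (Fin.cons a w) := by
    intro a w
    ext r s
    refine Fin.cases ?_ (fun r => ?_) r
    · simp [bordM]
    · simp [bordM, Matrix.updateRow_apply]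
  have hz : (bordM 1 0 u A).det = A.det := by
    rw [aux_bord_one]; congr 1; ext; simp
  rw [← hz, h 1, h 1 0]
  have : (Fin.cons 1 (-(x • v)) : Fin (m+1) → ℝ)
      = Fin.cons 1 0 + (-x) • (Fin.cons 0 v : Fin (m+1) → ℝ) := by
    ext s
    refine Fin.cases ?_ (fun r => ?_) s <;> simp
  rw [this, Matrix.det_updateRow_add, Matrix.det_updateRow_smul, ← h 0 v]
  ring

lemma aux_bord {m : ℕ} (v u : Fin m → ℝ) (A : Matrix (Fin m) (Fin m) ℝ) :
    ∑ r, (A.updateRow r (fun s => u r * v s)).det = - (bordM 0 v u A).det := by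
  have h1 := aux_det_deriv (fun x => A + x • Matrix.of fun r s => u r * v s)
    (Matrix.of fun r s => u r * v s) 0 (by
      intro r s
      simpa using ((hasDerivAt_id (0:ℝ)).mul_const (u r * v s)).const_add (A r s))
  have h2 : HasDerivAt (fun x : ℝ => A.det - x * (bordM 0 v u A).det) (-(bordM 0 v u A).det) 0 := by
    simpa using ((hasDerivAt_id (0:ℝ)).mul_const (bordM 0 v u A).det).const_sub A.det
  have : (fun x : ℝ => (A + x • Matrix.of fun r s => u r * v s).det)
      = fun x : ℝ => A.det - x * (bordM 0 v u A).det := by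
    funext x
    rw [← aux_bord_lin, aux_bord_one]
    congr 1
    ext r s
    simp; ring
  rw [this] at h1
  have h3 := h1.unique h2
  rw [zero_smul, add_zero] at h3
  exact h3

lemma aux_tel {m : ℕ} (F : ℕ → Fin (m+1) → ℝ) :
    ∑ r : Fin (m+1), ((Matrix.of fun r : Fin (m+1) => F r).updateRow r (F (r+1))).det
      = (Matrix.of fun r : Fin (m+1) => F (if (r:ℕ) = m then (r:ℕ)+1 else r)).det := by
  rw [Fin.sum_univ_castSucc, Finset.sum_eq_zero, zero_add]
  · congr 1
    ext r s
    by_cases hr : r = Fin.last m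
    · subst hr; simp
    · have : (r:ℕ) ≠ m := fun h => hr (Fin.ext h)
      simp [Matrix.updateRow_apply, hr, this]
  · intro r _
    apply Matrix.det_zero_of_row_eq (i := r.castSucc) (j := r.succ) (by simp [Fin.ext_iff])
    ext s
    have : r.succ ≠ r.castSucc := by simp [Fin.ext_iff]
    simp [Matrix.updateRow_apply, this]

lemma aux_J_symm (n : ℕ) (ξ c : Fin n → ℝ) (i j : ℤ) : Jmom n ξ c i j = Jmom n ξ c j i := by
  unfold Jmom
  rw [Finset.sum_comm]
  refine Finset.sum_congr rfl fun p _ => Finset.sum_congr rfl fun q _ => ?_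
  rw [add_comm (ξ q)]; ring

lemma aux_J_add (n : ℕ) (ξ c : Fin n → ℝ) (h : ∀ p, 0 < ξ p) (i j : ℤ) :
    betaM n ξ c i * betaM n ξ c j = Jmom n ξ c (i+1) j + Jmom n ξ c i (j+1) := by
  unfold Jmom betaM
  rw [Finset.sum_mul_sum, ← Finset.sum_add_distrib]
  refine Finset.sum_congr rfl fun p _ => ?_
  rw [← Finset.sum_add_distrib]
  refine Finset.sum_congr rfl fun q _ => ?_
  have hp := h p
  have hq := h q
  rw [zpow_add_one₀ hp.ne', zpow_add_one₀ hq.ne']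
  have : ξ p + ξ q ≠ 0 := by positivity
  field_simp

lemma aux_J_deriv (n : ℕ) (ξ c0 : Fin n → ℝ) (h : ∀ p, 0 < ξ p) (i j : ℤ) (t : ℝ) :
    HasDerivAt (fun s => Jmom n ξ (cT n ξ c0 s) i j)
      (betaM n ξ (cT n ξ c0 t) i * betaM n ξ (cT n ξ c0 t) j) t := by
  have hc : ∀ p, HasDerivAt (fun s => cT n ξ c0 s p) (ξ p * cT n ξ c0 t p) t := by
    intro p
    unfold cT
    have := (((hasDerivAt_id t).const_mul (ξ p)).exp).const_mul (c0 p)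
    refine this.congr_deriv ?_
    simp only [id, mul_one]; ring
  unfold Jmom betaM
  rw [Finset.sum_mul_sum]
  refine HasDerivAt.fun_sum fun p _ => HasDerivAt.fun_sum fun q _ => ?_
  refine (((hc p).mul (hc q)).const_mul (ξ p ^ i * ξ q ^ j / (ξ p + ξ q))).congr_deriv ?_
  have hp := h p
  have hq := h q
  have : ξ p + ξ q ≠ 0 := by positivity
  field_simp

lemma aux_gen (n : ℕ) (ξ c0 : Fin n → ℝ) (h : ∀ p, 0 < ξ p) (t : ℝ) {m : ℕ}
    (f g : Fin m → ℤ) :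
    HasDerivAt (fun x => (Matrix.of fun r s => Jmom n ξ (cT n ξ c0 x) (f r) (g s)).det)
      (-(bordM 0 (fun s => betaM n ξ (cT n ξ c0 t) (g s)) (fun r => betaM n ξ (cT n ξ c0 t) (f r))
        (Matrix.of fun r s => Jmom n ξ (cT n ξ c0 t) (f r) (g s))).det) t := by
  rw [← aux_bord]
  exact aux_det_deriv (fun x => Matrix.of fun r s => Jmom n ξ (cT n ξ c0 x) (f r) (g s))
    (fun r s => betaM n ξ (cT n ξ c0 t) (f r) * betaM n ξ (cT n ξ c0 t) (g s)) t
    (fun r s => aux_J_deriv n ξ c0 h _ _ t)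

lemma aux_tau (n : ℕ) (ξ c : Fin n → ℝ) (i j : ℤ) (m : ℕ) :
    tauDet n ξ c i j m = (Matrix.of fun r s : Fin m => Jmom n ξ c (i + (r:ℕ)) (j + (s:ℕ))).det := by
  unfold tauDet
  rw [if_neg (by omega)]
  rfl

lemma aux_rho (n : ℕ) (ξ c : Fin n → ℝ) (i j : ℤ) (m : ℕ) :
    rhoDet n ξ c i j (m + 1) = (bordM 0 (fun s : Fin m => betaM n ξ c (j + (s:ℕ)))
      (fun r => betaM n ξ c (i + (r:ℕ)))
      (Matrix.of fun r s : Fin m => Jmom n ξ c (i + (r:ℕ)) (j + (s:ℕ)))).det := by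
  unfold rhoDet
  split_ifs with hm
  · obtain rfl : m = 0 := by omega
    simp [bordM]
  · change Matrix.det (n := Fin (m+1)) _ = _
    congr 1
    ext r s
    refine Fin.cases ?_ (fun r => ?_) r <;> refine Fin.cases ?_ (fun s => ?_) s <;>
      simp [bordM]

lemma aux_omega (n : ℕ) (ξ c : Fin n → ℝ) (i j : ℤ) (m : ℕ) :
    omegaDet n ξ c i j ((m + 1 : ℕ) : ℤ) = (Matrix.of fun r s : Fin (m+1) => Jmom n ξ c (i + (r:ℕ))
      (j + ((if (s:ℕ) = m then (s:ℕ) + 1 else s : ℕ) : ℤ))).det := by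
  unfold omegaDet
  rw [if_neg (by omega)]
  change Matrix.det (n := Fin (m+1)) _ = _
  congr 1
  ext r s
  simp

lemma aux_nu (n : ℕ) (ξ c : Fin n → ℝ) (i j : ℤ) (m : ℕ) :
    nuDet n ξ c i j (((m + 1 : ℕ) : ℤ) + 1) =
      (bordM 0 (fun s : Fin (m+1) => betaM n ξ c (j + ((if (s:ℕ) = m then (s:ℕ) + 1 else s : ℕ) : ℤ)))
      (fun r => betaM n ξ c (i + (r:ℕ)))
      (Matrix.of fun r s : Fin (m+1) => Jmom n ξ c (i + (r:ℕ))
        (j + ((if (s:ℕ) = m then (s:ℕ) + 1 else s : ℕ) : ℤ)))).det := by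
  unfold nuDet
  rw [if_neg (by omega)]
  change Matrix.det (n := Fin (m+1+1)) _ = _
  congr 1
  have e : (((m + 1 : ℕ) : ℤ) + 1).toNat - 1 = m + 1 := by omega
  ext r s
  refine Fin.cases ?_ (fun r => ?_) r <;> refine Fin.cases ?_ (fun s => ?_) s <;>
      simp only [bordM, e] <;> simp

lemma aux_second (n : ℕ) (ξ c : Fin n → ℝ) (h : ∀ p, 0 < ξ p) (i j : ℤ) (m : ℕ) :
    -(rhoDet n ξ c i j (((m+1 : ℕ) : ℤ) + 1))
      = omegaDet n ξ c i j ((m+1 : ℕ) : ℤ) + omegaDet n ξ c j i ((m+1 : ℕ) : ℤ) := by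
  rw [aux_rho, ← aux_bord]
  have key : ∀ i j : ℤ, ∑ r : Fin (m+1), ((Matrix.of fun r s : Fin (m+1) =>
      Jmom n ξ c (i + (r:ℕ)) (j + (s:ℕ))).updateRow r
        (fun s => Jmom n ξ c (i + (r:ℕ) + 1) (j + (s:ℕ)))).det
      = omegaDet n ξ c j i ((m+1 : ℕ) : ℤ) := by
    intro i j
    have := aux_tel (m := m) (fun r s => Jmom n ξ c (i + (r:ℕ)) (j + (s:ℕ)))
    rw [aux_omega, ← Matrix.det_transpose]
    simp only [Nat.cast_add, Nat.cast_one, ← add_assoc] at this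
    refine this.trans ?_
    congr 1
    ext r s
    simp only [Matrix.of_apply, Matrix.transpose_apply]
    rw [aux_J_symm]
  have key2 := aux_transpose (Matrix.of fun r s : Fin (m+1) => Jmom n ξ c (i + (r:ℕ)) (j + (s:ℕ)))
    (Matrix.of fun r s : Fin (m+1) => Jmom n ξ c (i + (r:ℕ)) (j + (s:ℕ) + 1))
  rw [add_comm (omegaDet n ξ c i j _), ← key i j, ← key j i]
  have key3 : ∑ r : Fin (m+1), ((Matrix.of fun r s : Fin (m+1) =>
      Jmom n ξ c (i + (r:ℕ)) (j + (s:ℕ))).updateRow r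
        (fun s => Jmom n ξ c (i + (r:ℕ)) (j + (s:ℕ) + 1))).det
      = ∑ r : Fin (m+1), ((Matrix.of fun r s : Fin (m+1) =>
      Jmom n ξ c (j + (r:ℕ)) (i + (s:ℕ))).updateRow r
        (fun s => Jmom n ξ c (j + (r:ℕ) + 1) (i + (s:ℕ)))).det := by
    refine key2.trans ?_
    refine Finset.sum_congr rfl fun r _ => ?_
    congr 2
    · ext a b
      simp only [Matrix.of_apply, Matrix.transpose_apply]
      rw [aux_J_symm]
    · ext b
      simp only [Matrix.of_apply, Matrix.transpose_apply]
      rw [aux_J_symm]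
  rw [← key3, ← Finset.sum_add_distrib]
  refine Finset.sum_congr rfl fun r _ => ?_
  rw [← Matrix.det_updateRow_add]
  congr 2
  ext s
  simp only [Pi.add_apply]
  exact aux_J_add n ξ c h _ _

/-- Lemma 3.2: under `c_p(t) = c_p(0) e^{ξ_p t}`, for all `i, j ∈ ℤ`, `k ≥ 0`, `t ∈ ℝ`:
`τ_k^{(i,j)}` is twice differentiable with
`(d/dt) τ_k^{(i,j)} = -ρ_{k+1}^{(i,j)}`,
`(d/dt) τ_k^{(i,j)} = ω_k^{(i,j)} + ω_k^{(j,i)}`, and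
`(d²/dt²) τ_k^{(i,j)} = -ν_{k+1}^{(i,j)} - ν_{k+1}^{(j,i)}`. -/
theorem stmt_15 (n : ℕ) (hn : 1 ≤ n) (ξ c0 : Fin n → ℝ)
    (hξ0 : ∀ p, 0 < ξ p) (hξmono : StrictMono ξ) (hc : ∀ p, 0 < c0 p)
    (i j k : ℤ) (hk : 0 ≤ k) (t : ℝ) :
    HasDerivAt (fun s => tauDet n ξ (cT n ξ c0 s) i j k)
      (-(rhoDet n ξ (cT n ξ c0 t) i j (k + 1))) t ∧
    HasDerivAt (fun s => tauDet n ξ (cT n ξ c0 s) i j k)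
      (omegaDet n ξ (cT n ξ c0 t) i j k + omegaDet n ξ (cT n ξ c0 t) j i k) t ∧
    HasDerivAt (deriv (fun s => tauDet n ξ (cT n ξ c0 s) i j k))
      (-(nuDet n ξ (cT n ξ c0 t) i j (k + 1)) - nuDet n ξ (cT n ξ c0 t) j i (k + 1)) t := by
  obtain ⟨m, rfl⟩ := Int.eq_ofNat_of_zero_le hk
  have h1 : ∀ t, HasDerivAt (fun s => tauDet n ξ (cT n ξ c0 s) i j (m : ℤ))
      (-(rhoDet n ξ (cT n ξ c0 t) i j ((m : ℤ) + 1))) t := by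
    intro t
    simp only [aux_tau, aux_rho]
    exact aux_gen n ξ c0 hξ0 t _ _
  have h2 : ∀ t, -(rhoDet n ξ (cT n ξ c0 t) i j ((m : ℤ) + 1)) =
      omegaDet n ξ (cT n ξ c0 t) i j m + omegaDet n ξ (cT n ξ c0 t) j i m := by
    intro t
    cases m with
    | zero => simp [rhoDet, omegaDet]
    | succ m => exact aux_second n ξ _ hξ0 i j m
  refine ⟨h1 t, h2 t ▸ h1 t, ?_⟩
  have h3 : deriv (fun s => tauDet n ξ (cT n ξ c0 s) i j (m : ℤ)) = fun t =>
      omegaDet n ξ (cT n ξ c0 t) i j m + omegaDet n ξ (cT n ξ c0 t) j i m := by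
    funext t
    rw [(h1 t).deriv, h2 t]
  have h4 : ∀ i j : ℤ, HasDerivAt (fun s => omegaDet n ξ (cT n ξ c0 s) i j m)
      (-(nuDet n ξ (cT n ξ c0 t) i j ((m : ℤ) + 1))) t := by
    intro i j
    cases m with
    | zero => simpa [nuDet, omegaDet] using hasDerivAt_const t (0:ℝ)
    | succ m =>
      simp only [aux_omega, aux_nu]
      exact aux_gen n ξ c0 hξ0 t _ _
  rw [h3, sub_eq_add_neg]
  exact (h4 i j).add (h4 j i)
end

section
/- Under the time evolution c_p(t) = c_p(0) e^{ξ_p t}, for every integer j, every integer k ≥ 1 and every t ∈ ℝ, the tau and sigma determinants satisfy the bilinear ODE system: (d/dt τ_k^{(j,j)}) τ_{k−1}^{(j,j)} − τ_k^{(j,j)} (d/dt τ_{k−1}^{(j,j)}) = ( σ_k^{(j,j)} )², and (d²/dt² τ_k^{(j,j)}) τ_k^{(j,j)} − ( d/dt τ_k^{(j,j)} )² = −2 σ_{k+1}^{(j,j)} σ_k^{(j,j)}. -/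
open Finset

namespace S16
open Matrix

theorem hasDerivAt_det {m : ℕ} (A : ℝ → Matrix (Fin m) (Fin m) ℝ) (A' : Matrix (Fin m) (Fin m) ℝ)
    (t : ℝ) (h : ∀ i j, HasDerivAt (fun s => A s i j) (A' i j) t) :
    HasDerivAt (fun s => (A s).det) (∑ l, ((A t).updateCol l (fun i => A' i l)).det) t := by
  simp only [Matrix.det_apply']
  rw [Finset.sum_comm]
  refine HasDerivAt.fun_sum fun σ _ => ?_
  rw [← Finset.mul_sum]
  refine HasDerivAt.const_mul _ ?_
  refine (HasDerivAt.fun_finsetProd (u := Finset.univ) fun i _ => h (σ i) i).congr_deriv ?_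
  refine Finset.sum_congr rfl fun l _ => ?_
  rw [← Finset.prod_erase_mul _ _ (Finset.mem_univ l), smul_eq_mul]
  congr 1
  · refine Finset.prod_congr rfl fun i hi => ?_
    rw [Matrix.updateCol_ne (Finset.ne_of_mem_erase hi)]
  · simp

/-- derivative of det in a rank one direction -/
theorem hasDerivAt_det_rankOne {m : ℕ} (A : ℝ → Matrix (Fin m) (Fin m) ℝ) (u v : Fin m → ℝ)
    (t : ℝ) (h : ∀ i j, HasDerivAt (fun s => A s i j) (u i * v j) t) :
    HasDerivAt (fun s => (A s).det) (v ⬝ᵥ (A t).cramer u) t := by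
  refine (hasDerivAt_det A (fun i j => u i * v j) t h).congr_deriv ?_
  refine Finset.sum_congr rfl fun l _ => ?_
  have : (fun i => u i * v l) = v l • u := by ext i; simp [mul_comm]
  rw [this, det_updateCol_smul, cramer_apply]

theorem cramer_rankOne {m : ℕ} (A : Matrix (Fin m) (Fin m) ℝ) (u v : Fin m → ℝ) :
    (A + vecMulVec u v).cramer u = A.cramer u := by
  ext i
  rw [cramer_apply, cramer_apply, ← det_transpose, ← det_transpose (A.updateCol i u)]
  refine det_eq_of_forall_row_eq_smul_add_const (fun j => if j = i then 0 else v j) i (by simp) ?_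
  intro a b
  by_cases h : a = i
  · subst h; simp
  · simp [h, vecMulVec_apply, mul_comm]

theorem det_rankOne {m : ℕ} (A : Matrix (Fin m) (Fin m) ℝ) (u v : Fin m → ℝ) :
    (A + vecMulVec u v).det = A.det + v ⬝ᵥ A.cramer u := by
  have key : ∀ s : ℝ, HasDerivAt (fun s : ℝ => (A + s • vecMulVec u v).det - s * (v ⬝ᵥ A.cramer u)) 0 s := by
    intro s
    have h1 := hasDerivAt_det_rankOne (fun s : ℝ => A + s • vecMulVec u v) u v s (by
      intro i j
      simpa [vecMulVec_apply] using
        ((hasDerivAt_id s).mul_const (u i * v j)).const_add (A i j))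
    have h2 : (A + s • vecMulVec u v).cramer u = A.cramer u := by
      have h3 : s • vecMulVec u v = vecMulVec u (s • v) := by
        ext i j
        simp [vecMulVec_apply, mul_left_comm]
      rw [h3]
      exact cramer_rankOne A u _
    rw [h2] at h1
    exact (h1.fun_sub ((hasDerivAt_id s).mul_const (v ⬝ᵥ A.cramer u))).congr_deriv (by simp)
  have := is_const_of_deriv_eq_zero (fun s => (key s).differentiableAt) (fun s => (key s).deriv) 1 0
  simp at this
  linarith

/-- bordered determinant -/
theorem det_bordered {m : ℕ} (W : Matrix (Fin (m+1)) (Fin (m+1)) ℝ) :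
    W.det = W (Fin.last m) (Fin.last m) * (W.submatrix Fin.castSucc Fin.castSucc).det
      - (fun j => W (Fin.last m) (Fin.castSucc j)) ⬝ᵥ
        (W.submatrix Fin.castSucc Fin.castSucc).cramer (fun i => W (Fin.castSucc i) (Fin.last m)) := by
  set A := W.submatrix Fin.castSucc Fin.castSucc with hA
  set b : Fin m → ℝ := fun i => W (Fin.castSucc i) (Fin.last m) with hb
  set r : Fin m → ℝ := fun j => W (Fin.last m) (Fin.castSucc j) with hr
  set d := W (Fin.last m) (Fin.last m)
  have e1 : W.det = (W.updateRow (Fin.last m) (Function.update (W (Fin.last m)) (Fin.last m) 1)).det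
      + (d - 1) * A.det := by
    have h0 : A.det = (W.updateRow (Fin.last m) (Pi.single (Fin.last m) 1)).det := by
      rw [← adjugate_apply, adjugate_fin_succ_eq_det_submatrix]
      simp [hA, ← two_mul, Fin.succAbove_last]
    rw [h0, ← det_updateRow_smul, ← det_updateRow_add]
    congr 1
    ext i j
    by_cases hi : i = Fin.last m
    · subst hi
      by_cases hj : j = Fin.last m
      · subst hj; simp [d]
      · simp [hj]
    · simp [hi]
  have e2 : (W.updateRow (Fin.last m) (Function.update (W (Fin.last m)) (Fin.last m) 1)).det
      = (A + vecMulVec (-b) r).det := by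
    rw [← det_submatrix_equiv_self (finSumFinEquiv (m := m) (n := 1))]
    have : (W.updateRow (Fin.last m) (Function.update (W (Fin.last m)) (Fin.last m) 1)).submatrix
        (finSumFinEquiv (m := m) (n := 1)) (finSumFinEquiv (m := m) (n := 1)) =
        fromBlocks A (replicateCol (Fin 1) b) (replicateRow (Fin 1) r) 1 := by
      have hl : ∀ x : Fin 1, Fin.natAdd m x = Fin.last m := by
        intro x; ext; simp
      have hc : ∀ x : Fin m, Fin.castAdd 1 x = Fin.castSucc x := fun x => rfl
      have hne : ∀ x : Fin m, Fin.castSucc x ≠ Fin.last m := fun x => (Fin.castSucc_lt_last x).ne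
      ext i j
      rcases i with i | i <;> rcases j with j | j <;>
        simp [hl, hc, hne, hA, hb, hr, updateRow_apply, Matrix.one_apply,
          eq_iff_true_of_subsingleton]
    rw [this, det_fromBlocks_one₂₂]
    congr 1
    ext i j
    simp [vecMulVec_apply, Matrix.mul_apply, sub_eq_add_neg]
  rw [e1, e2, det_rankOne, map_neg, dotProduct_neg]
  ring

/-- symmetric rank-one Jacobi identity -/
theorem jacobi_sym {m : ℕ} (A : Matrix (Fin (m+1)) (Fin (m+1)) ℝ) (hA : A.IsSymm) (b : Fin (m+1) → ℝ) :
    (b ⬝ᵥ A.cramer b) * (A.submatrix Fin.castSucc Fin.castSucc).det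
     - A.det * ((fun i => b (Fin.castSucc i)) ⬝ᵥ (A.submatrix Fin.castSucc Fin.castSucc).cramer
        (fun i => b (Fin.castSucc i))) = (A.cramer b (Fin.last m)) ^ 2 := by
  have hadj : ∀ M : Matrix (Fin (m+1)) (Fin (m+1)) ℝ, M.adjugate (Fin.last m) (Fin.last m) =
      (M.submatrix Fin.castSucc Fin.castSucc).det := by
    intro M
    rw [adjugate_fin_succ_eq_det_submatrix]
    simp [← two_mul, Fin.succAbove_last]
  set C := A + vecMulVec b b with hC
  have hCs : C.IsSymm := by
    ext i j
    simp [hC, vecMulVec_apply, hA.apply, mul_comm]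
  have h1 : C.det = A.det + b ⬝ᵥ A.cramer b := det_rankOne A b b
  have h2 : (C.submatrix Fin.castSucc Fin.castSucc).det = (A.submatrix Fin.castSucc Fin.castSucc).det
      + ((fun i => b (Fin.castSucc i)) ⬝ᵥ (A.submatrix Fin.castSucc Fin.castSucc).cramer
        (fun i => b (Fin.castSucc i))) := by
    rw [← det_rankOne]; rfl
  have h3 : A.adjugate * vecMulVec b b * C.adjugate = C.det • A.adjugate - A.det • C.adjugate := by
    have : vecMulVec b b = C - A := by simp [hC]
    rw [this, mul_sub, sub_mul, Matrix.mul_assoc, mul_adjugate, adjugate_mul]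
    simp
  have h4 : (A.adjugate * vecMulVec b b * C.adjugate) (Fin.last m) (Fin.last m) =
      (A.cramer b (Fin.last m)) ^ 2 := by
    have h5 : b ᵥ* C.adjugate = A.cramer b := by
      rw [← cramer_rankOne A b b, cramer_eq_adjugate_mulVec, ← hC, ← vecMul_transpose,
        hCs.adjugate.eq]
    rw [mul_vecMulVec, vecMulVec_mul, h5, ← cramer_eq_adjugate_mulVec, vecMulVec_apply, sq]
  rw [h3] at h4
  simp only [Matrix.sub_apply, Matrix.smul_apply, smul_eq_mul, hadj] at h4
  rw [← h4, h1, h2]; ring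


section
variable (n : ℕ) (ξ c0 : Fin n → ℝ) (hξ0 : ∀ p, 0 < ξ p)

theorem Jmom_symm (c : Fin n → ℝ) (a b : ℤ) : Jmom n ξ c a b = Jmom n ξ c b a := by
  unfold Jmom
  rw [Finset.sum_comm]
  refine Finset.sum_congr rfl fun p _ => Finset.sum_congr rfl fun q _ => ?_
  rw [add_comm (ξ q), mul_comm (c q), mul_comm (ξ q ^ a)]

theorem betaM_mul (c : Fin n → ℝ) (a b : ℤ) : betaM n ξ c a * betaM n ξ c b =
    ∑ p : Fin n, ∑ q : Fin n, ξ p ^ a * ξ q ^ b * (c p * c q) := by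
  unfold betaM
  rw [Finset.sum_mul_sum]
  refine Finset.sum_congr rfl fun p _ => Finset.sum_congr rfl fun q _ => ?_
  ring

theorem Jmom_shift (hξ0 : ∀ p, 0 < ξ p) (c : Fin n → ℝ) (a b : ℤ) :
    Jmom n ξ c (a + 1) b + Jmom n ξ c a (b + 1) = betaM n ξ c a * betaM n ξ c b := by
  rw [betaM_mul]
  unfold Jmom
  rw [← Finset.sum_add_distrib]
  refine Finset.sum_congr rfl fun p _ => ?_
  rw [← Finset.sum_add_distrib]
  refine Finset.sum_congr rfl fun q _ => ?_
  have hp := hξ0 p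
  have hq := hξ0 q
  rw [zpow_add_one₀ hp.ne', zpow_add_one₀ hq.ne']
  field_simp

theorem hasDerivAt_cT (p : Fin n) (t : ℝ) :
    HasDerivAt (fun s => cT n ξ c0 s p) (ξ p * cT n ξ c0 t p) t := by
  unfold cT
  have h := (((hasDerivAt_id t).const_mul (ξ p)).exp).const_mul (c0 p)
  exact h.congr_deriv (by simp; ring)

theorem hasDerivAt_betaM (hξ0 : ∀ p, 0 < ξ p) (a : ℤ) (t : ℝ) :
    HasDerivAt (fun s => betaM n ξ (cT n ξ c0 s) a) (betaM n ξ (cT n ξ c0 t) (a + 1)) t := by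
  unfold betaM
  refine HasDerivAt.fun_sum fun p _ => ?_
  refine ((hasDerivAt_cT n ξ c0 p t).const_mul _).congr_deriv ?_
  rw [zpow_add_one₀ (hξ0 p).ne']; ring

theorem hasDerivAt_Jmom (hξ0 : ∀ p, 0 < ξ p) (a b : ℤ) (t : ℝ) :
    HasDerivAt (fun s => Jmom n ξ (cT n ξ c0 s) a b)
      (betaM n ξ (cT n ξ c0 t) a * betaM n ξ (cT n ξ c0 t) b) t := by
  rw [betaM_mul]
  unfold Jmom
  refine HasDerivAt.fun_sum fun p _ => HasDerivAt.fun_sum fun q _ => ?_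
  refine (((hasDerivAt_cT n ξ c0 p t).fun_mul (hasDerivAt_cT n ξ c0 q t)).const_mul _).congr_deriv ?_
  have hp := hξ0 p
  have hq := hξ0 q
  field_simp

/-- the moment matrix -/
noncomputable def Jmat (c : Fin n → ℝ) (j : ℤ) (m : ℕ) : Matrix (Fin m) (Fin m) ℝ :=
  Matrix.of fun r s => Jmom n ξ c (j + ((r : ℕ) : ℤ)) (j + ((s : ℕ) : ℤ))

/-- the moment vector -/
noncomputable def bvec (c : Fin n → ℝ) (j : ℤ) (m : ℕ) : Fin m → ℝ :=
  fun r => betaM n ξ c (j + ((r : ℕ) : ℤ))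

theorem Jmat_symm (c : Fin n → ℝ) (j : ℤ) (m : ℕ) : (Jmat n ξ c j m).IsSymm := by
  ext r s
  simp [Jmat, Jmom_symm n ξ c (j + ((r : ℕ) : ℤ))]

theorem tauDet_eq (c : Fin n → ℝ) (j : ℤ) (m : ℕ) :
    tauDet n ξ c j j (m : ℤ) = (Jmat n ξ c j m).det := by
  unfold tauDet
  rw [if_neg (by omega)]
  rfl

theorem sigmaDet_eq (c : Fin n → ℝ) (j : ℤ) (m : ℕ) :
    sigmaDet n ξ c j j ((m + 1 : ℕ) : ℤ) =
      (-1) ^ m * (Jmat n ξ c j (m + 1)).cramer (bvec n ξ c j (m + 1)) (Fin.last m) := by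
  unfold sigmaDet
  rw [if_neg (by omega)]
  change Matrix.det (Matrix.of fun r s : Fin (m + 1) =>
    if (s : ℕ) = 0 then betaM n ξ c (j + ((r : ℕ) : ℤ))
    else Jmom n ξ c (j + ((r : ℕ) : ℤ)) (j + (((s : ℕ) - 1 : ℕ) : ℤ))) = _
  set S : Matrix (Fin (m+1)) (Fin (m+1)) ℝ := Matrix.of fun r s : Fin (m + 1) =>
    if (s : ℕ) = 0 then betaM n ξ c (j + ((r : ℕ) : ℤ))
    else Jmom n ξ c (j + ((r : ℕ) : ℤ)) (j + (((s : ℕ) - 1 : ℕ) : ℤ)) with hS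
  have h : S.submatrix id (finRotate (m + 1)) =
      (Jmat n ξ c j (m + 1)).updateCol (Fin.last m) (bvec n ξ c j (m + 1)) := by
    ext r s
    rw [submatrix_apply, hS, of_apply, coe_finRotate]
    by_cases hs : s = Fin.last m
    · subst hs; simp [bvec]
    · simp [hs, Jmat]
  rw [cramer_apply, ← h, det_permute', sign_finRotate]
  simp [← mul_assoc, ← mul_pow]

theorem cramer_border (c : Fin n → ℝ) (j : ℤ) (m : ℕ) :
    (Jmat n ξ c j (m + 1)).cramer (bvec n ξ c j (m + 1)) (Fin.last m) =
    betaM n ξ c (j + m) * (Jmat n ξ c j m).det -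
      (fun s : Fin m => Jmom n ξ c (j + m) (j + ((s : ℕ) : ℤ))) ⬝ᵥ
        (Jmat n ξ c j m).cramer (bvec n ξ c j m) := by
  rw [cramer_apply, det_bordered]
  have hne : ∀ x : Fin m, Fin.castSucc x ≠ Fin.last m := fun x => (Fin.castSucc_lt_last x).ne
  have h1 : ((Jmat n ξ c j (m + 1)).updateCol (Fin.last m) (bvec n ξ c j (m + 1))).submatrix
      Fin.castSucc Fin.castSucc = Jmat n ξ c j m := by
    ext r s
    simp [hne, Jmat]
  rw [h1]
  simp [hne, bvec, Jmat]
  rfl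

/-- the key algebraic identity for the second equation -/
theorem alg2 (hξ0 : ∀ p, 0 < ξ p) (c : Fin n → ℝ) (j : ℤ) (m : ℕ) :
    2 * (Jmat n ξ c j (m+1)).det * (bvec n ξ c (j+1) (m+1) ⬝ᵥ
        (Jmat n ξ c j (m+1)).cramer (bvec n ξ c j (m+1))) -
      (bvec n ξ c j (m+1) ⬝ᵥ (Jmat n ξ c j (m+1)).cramer (bvec n ξ c j (m+1))) ^ 2 =
    2 * (Jmat n ξ c j (m+1)).cramer (bvec n ξ c j (m+1)) (Fin.last m) *
     (Jmat n ξ c j (m+1+1)).cramer (bvec n ξ c j (m+1+1)) (Fin.last (m+1)) := by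
  rw [cramer_border n ξ c j (m+1)]
  set J := Jmat n ξ c j (m+1) with hJ
  set b := bvec n ξ c j (m+1) with hb
  set x := J.cramer b with hx
  set B : Matrix (Fin (m+1)) (Fin (m+1)) ℝ := Matrix.of fun r s =>
    Jmom n ξ c (j + ((r : ℕ) : ℤ) + 1) (j + ((s : ℕ) : ℤ)) with hB
  have hJx : J *ᵥ x = J.det • b := mulVec_cramer J b
  have hBB : B + Bᵀ = vecMulVec b b := by
    ext r s
    simp only [hB, Matrix.add_apply, transpose_apply, of_apply, vecMulVec_apply, hb, bvec]
    rw [Jmom_symm n ξ c (j + ((s : ℕ) : ℤ) + 1), Jmom_shift n ξ hξ0]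
  have hq : 2 * (x ⬝ᵥ B *ᵥ x) = (b ⬝ᵥ x) ^ 2 := by
    have h1 : x ⬝ᵥ Bᵀ *ᵥ x = x ⬝ᵥ B *ᵥ x := by
      rw [mulVec_transpose, dotProduct_comm, dotProduct_mulVec]
    have h2 : x ⬝ᵥ (B + Bᵀ) *ᵥ x = (b ⬝ᵥ x) ^ 2 := by
      rw [hBB, vecMulVec_mulVec, dotProduct_smul, dotProduct_comm x b, sq]
      simp
    rw [add_mulVec, dotProduct_add, h1] at h2
    linarith
  have hv : J.det • bvec n ξ c (j+1) (m+1) - B *ᵥ x = Pi.single (Fin.last m)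
      (betaM n ξ c (j + ((m + 1 : ℕ) : ℤ)) * J.det -
      (fun s : Fin (m+1) => Jmom n ξ c (j + ((m + 1 : ℕ) : ℤ)) (j + ((s : ℕ) : ℤ))) ⬝ᵥ x) := by
    ext r
    refine Fin.lastCases ?_ (fun r => ?_) r
    · rw [Pi.single_eq_same]
      simp only [Pi.sub_apply, Pi.smul_apply, smul_eq_mul, mulVec, bvec, hB, Fin.val_last]
      rw [mul_comm]
      congr 3
      · push_cast; ring
      · ext s
        simp only [of_apply]
        congr 1; push_cast; ring
    · rw [Pi.single_eq_of_ne (Fin.castSucc_lt_last r).ne]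
      have h := congrFun hJx r.succ
      simp only [Pi.sub_apply, Pi.smul_apply, smul_eq_mul, mulVec, bvec, hB, hJ, hb] at h ⊢
      rw [sub_eq_zero]
      have e : j + 1 + ((r.castSucc : ℕ) : ℤ) = j + ((r.succ : ℕ) : ℤ) := by
        simp; ring
      rw [e, ← h]
      congr 1
      ext s
      simp only [of_apply, Jmat]
      congr 1
      simp; ring
  have hf := congrArg (fun w => x ⬝ᵥ w) hv
  simp only [dotProduct_sub, dotProduct_smul, smul_eq_mul, dotProduct_single] at hf
  rw [dotProduct_comm (bvec n ξ c (j+1) (m+1)) x, ← hq, mul_assoc 2 (x (Fin.last m)), ← hf]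
  ring

theorem hasDerivAt_tau (hξ0 : ∀ p, 0 < ξ p) (j : ℤ) (m : ℕ) (t : ℝ) :
    HasDerivAt (fun s => (Jmat n ξ (cT n ξ c0 s) j m).det)
      (bvec n ξ (cT n ξ c0 t) j m ⬝ᵥ
        (Jmat n ξ (cT n ξ c0 t) j m).cramer (bvec n ξ (cT n ξ c0 t) j m)) t :=
  hasDerivAt_det_rankOne (fun s => Jmat n ξ (cT n ξ c0 s) j m) _ _ t
    (fun a b => hasDerivAt_Jmom n ξ c0 hξ0 _ _ t)

theorem hasDerivAt_bvec (hξ0 : ∀ p, 0 < ξ p) (j : ℤ) (m : ℕ) (t : ℝ) (i : Fin m) :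
    HasDerivAt (fun s => bvec n ξ (cT n ξ c0 s) j m i) (bvec n ξ (cT n ξ c0 t) (j+1) m i) t := by
  refine (hasDerivAt_betaM n ξ c0 hξ0 _ t).congr_deriv ?_
  unfold bvec
  congr 1; ring

theorem hasDerivAt_x (hξ0 : ∀ p, 0 < ξ p) (j : ℤ) (m : ℕ) (t : ℝ) (i : Fin m) :
    HasDerivAt (fun s => (Jmat n ξ (cT n ξ c0 s) j m).cramer (bvec n ξ (cT n ξ c0 s) j m) i)
      ((Jmat n ξ (cT n ξ c0 t) j m).cramer (bvec n ξ (cT n ξ c0 t) (j+1) m) i) t := by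
  simp only [cramer_apply]
  set b := bvec n ξ (cT n ξ c0 t) j m with hb
  refine (hasDerivAt_det
    (fun s => (Jmat n ξ (cT n ξ c0 s) j m).updateCol i (bvec n ξ (cT n ξ c0 s) j m))
    (Matrix.of fun a l => if l = i then bvec n ξ (cT n ξ c0 t) (j+1) m a else b a * b l) t ?_).congr_deriv ?_
  · intro a l
    by_cases hl : l = i
    · subst hl
      simpa using hasDerivAt_bvec n ξ c0 hξ0 j m t a
    · simpa [hl, Jmat, hb, bvec] using
        hasDerivAt_Jmom n ξ c0 hξ0 (j + ((a : ℕ) : ℤ)) (j + ((l : ℕ) : ℤ)) t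
  · rw [Finset.sum_eq_single i]
    · congr 1
      ext a l
      by_cases hl : l = i <;> simp [hl]
    · intro l _ hl
      have : (fun a => (Matrix.of fun a l => if l = i then bvec n ξ (cT n ξ c0 t) (j+1) m a
          else b a * b l) a l) = b l • b := by
        ext a; simp [hl, mul_comm]
      rw [this, det_updateCol_smul, det_zero_of_column_eq hl, mul_zero]
      intro a
      simp [hl.symm, hb]
    · simp

theorem hasDerivAt_dtau (hξ0 : ∀ p, 0 < ξ p) (j : ℤ) (m : ℕ) (t : ℝ) :
    HasDerivAt (fun s => bvec n ξ (cT n ξ c0 s) j m ⬝ᵥ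
        (Jmat n ξ (cT n ξ c0 s) j m).cramer (bvec n ξ (cT n ξ c0 s) j m))
      (2 * (bvec n ξ (cT n ξ c0 t) (j+1) m ⬝ᵥ
        (Jmat n ξ (cT n ξ c0 t) j m).cramer (bvec n ξ (cT n ξ c0 t) j m))) t := by
  have h : bvec n ξ (cT n ξ c0 t) (j+1) m ⬝ᵥ
        (Jmat n ξ (cT n ξ c0 t) j m).cramer (bvec n ξ (cT n ξ c0 t) j m) =
      bvec n ξ (cT n ξ c0 t) j m ⬝ᵥ
        (Jmat n ξ (cT n ξ c0 t) j m).cramer (bvec n ξ (cT n ξ c0 t) (j+1) m) := by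
    rw [cramer_eq_adjugate_mulVec, cramer_eq_adjugate_mulVec, dotProduct_mulVec, dotProduct_comm,
      ← mulVec_transpose, (Jmat_symm n ξ _ j m).adjugate.eq]
  rw [two_mul]
  nth_rewrite 2 [h]
  simp only [dotProduct]
  rw [← Finset.sum_add_distrib]
  exact HasDerivAt.fun_sum fun i _ =>
    (hasDerivAt_bvec n ξ c0 hξ0 j m t i).fun_mul (hasDerivAt_x n ξ c0 hξ0 j m t i)

end

end S16

/-- Corollary 3.3: under `c_p(t) = c_p(0) e^{ξ_p t}`, for all `j ∈ ℤ`, `k ≥ 1`, `t ∈ ℝ`: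
`(d/dt τ_k^{(j,j)}) τ_{k-1}^{(j,j)} - τ_k^{(j,j)} (d/dt τ_{k-1}^{(j,j)}) = (σ_k^{(j,j)})²` and
`(d²/dt² τ_k^{(j,j)}) τ_k^{(j,j)} - (d/dt τ_k^{(j,j)})² = -2 σ_{k+1}^{(j,j)} σ_k^{(j,j)}`. -/
theorem stmt_16 (n : ℕ) (hn : 1 ≤ n) (ξ c0 : Fin n → ℝ)
    (hξ0 : ∀ p, 0 < ξ p) (hξmono : StrictMono ξ) (hc : ∀ p, 0 < c0 p)
    (j k : ℤ) (hk : 1 ≤ k) (t : ℝ) :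
    deriv (fun s => tauDet n ξ (cT n ξ c0 s) j j k) t * tauDet n ξ (cT n ξ c0 t) j j (k - 1) -
        tauDet n ξ (cT n ξ c0 t) j j k * deriv (fun s => tauDet n ξ (cT n ξ c0 s) j j (k - 1)) t =
      (sigmaDet n ξ (cT n ξ c0 t) j j k) ^ 2 ∧
    deriv (deriv (fun s => tauDet n ξ (cT n ξ c0 s) j j k)) t * tauDet n ξ (cT n ξ c0 t) j j k -
        (deriv (fun s => tauDet n ξ (cT n ξ c0 s) j j k) t) ^ 2 =
      -2 * sigmaDet n ξ (cT n ξ c0 t) j j (k + 1) * sigmaDet n ξ (cT n ξ c0 t) j j k := by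
  obtain ⟨m, rfl⟩ : ∃ m : ℕ, k = ((m + 1 : ℕ) : ℤ) := ⟨(k - 1).toNat, by omega⟩
  have e1 : (((m + 1 : ℕ) : ℤ) - 1) = (m : ℤ) := by push_cast; ring
  have e2 : (((m + 1 : ℕ) : ℤ) + 1) = ((m + 1 + 1 : ℕ) : ℤ) := by push_cast; ring
  have hd : ∀ m : ℕ, deriv (fun s => (S16.Jmat n ξ (cT n ξ c0 s) j m).det) = fun t =>
      dotProduct (S16.bvec n ξ (cT n ξ c0 t) j m)
        ((S16.Jmat n ξ (cT n ξ c0 t) j m).cramer (S16.bvec n ξ (cT n ξ c0 t) j m)) := fun m =>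
    funext fun s => (S16.hasDerivAt_tau n ξ c0 hξ0 j m s).deriv
  rw [e1, e2]
  simp only [S16.tauDet_eq, S16.sigmaDet_eq, hd, (S16.hasDerivAt_dtau n ξ c0 hξ0 j (m+1) t).deriv]
  constructor
  · rw [mul_pow, ← pow_mul, mul_comm m 2, pow_mul, neg_one_sq, one_pow, one_mul,
      ← S16.jacobi_sym _ (S16.Jmat_symm n ξ _ j (m+1))]
    rfl
  · have h := S16.alg2 n ξ hξ0 (cT n ξ c0 t) j m
    have hs : ((-1 : ℝ) ^ m) * (-1) ^ m = 1 := by rw [← mul_pow]; simp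
    rw [pow_succ]
    linear_combination h - 2 * (S16.Jmat n ξ (cT n ξ c0 t) j (m+1)).cramer (S16.bvec n ξ (cT n ξ c0 t) j (m+1)) (Fin.last m) *
     (S16.Jmat n ξ (cT n ξ c0 t) j (m+1+1)).cramer (S16.bvec n ξ (cT n ξ c0 t) j (m+1+1)) (Fin.last (m+1)) * hs
end

section
/- Under the time evolution c_p(t) = c_p(0) e^{ξ_p t}, for every integer j, every integer k ≥ 1 and every t ∈ ℝ, the tau functions τ_k = τ_k^{(j,j)}(t) satisfy the quartic lattice equation (a 1+1 dimensional reduction of the discrete CKP equation in continuous form): ( τ̈_k τ_k − (τ̇_k)² )² = 4 ( τ̇_{k+1} τ_k − τ_{k+1} τ̇_k ) ( τ̇_k τ_{k−1} − τ_k τ̇_{k−1} ), where dots denote derivatives with respect to t. -/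
open Finset

namespace CToda
open Matrix

lemma diff_det {m : ℕ} (M : ℝ → Matrix (Fin m) (Fin m) ℝ)
    (h : ∀ i j, Differentiable ℝ (fun t => M t i j)) : Differentiable ℝ (fun t => (M t).det) := by
  simp only [Matrix.det_apply']
  fun_prop

lemma diff_inv {m : ℕ} (M : ℝ → Matrix (Fin m) (Fin m) ℝ)
    (h : ∀ i j, Differentiable ℝ (fun t => M t i j)) (hd : ∀ t, (M t).det ≠ 0) (i j) :
    Differentiable ℝ (fun t => (M t)⁻¹ i j) := by
  simp only [Matrix.inv_def, Matrix.smul_apply, Ring.inverse_eq_inv', smul_eq_mul]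
  refine Differentiable.mul ((diff_det M h).inv hd) ?_
  simp only [Matrix.adjugate_apply]
  apply diff_det
  intro a b
  by_cases ha : a = j
  · subst ha; simp
  · simp only [Matrix.updateRow_ne ha]; exact h a b

lemma solve_deriv {m : ℕ} (A : ℝ → Matrix (Fin m) (Fin m) ℝ) (b u u' : ℝ → Fin m → ℝ)
    (hA : ∀ i j t, HasDerivAt (fun t => A t i j) (b t i * b t j) t)
    (hu : ∀ i t, HasDerivAt (fun t => u t i) (u' t i) t)
    (hd : ∀ t, (A t).det ≠ 0) (i : Fin m) (t : ℝ) :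
    HasDerivAt (fun t => ((A t)⁻¹ *ᵥ u t) i)
      (((A t)⁻¹ *ᵥ (u' t - (b t ⬝ᵥ ((A t)⁻¹ *ᵥ u t)) • b t)) i) t := by
  have hAd : ∀ i j, Differentiable ℝ (fun t => A t i j) :=
    fun i j t => (hA i j t).differentiableAt
  have hdz : ∀ i, Differentiable ℝ (fun t => ((A t)⁻¹ *ᵥ u t) i) := by
    intro i
    have h1 := diff_inv A hAd hd
    have h2 : ∀ i, Differentiable ℝ (fun t => u t i) := fun i t => (hu i t).differentiableAt
    have h3 : Differentiable ℝ (fun t => ∑ q, (A t)⁻¹ i q * u t q) :=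
      Differentiable.fun_sum fun q _ => (h1 i q).mul (h2 q)
    exact h3
  set z := fun t => (A t)⁻¹ *ᵥ u t with hz
  set z' : Fin m → ℝ := fun i => deriv (fun t => z t i) t with hz'
  have hzd : ∀ i, HasDerivAt (fun t => z t i) (z' i) t := fun i => (hdz i t).hasDerivAt
  have hunit : IsUnit (A t).det := (hd t).isUnit
  have hAz : ∀ s, A s *ᵥ z s = u s := by
    intro s
    simp only [hz, Matrix.mulVec_mulVec]
    rw [Matrix.mul_nonsing_inv _ (hd s).isUnit, Matrix.one_mulVec]
  have key : A t *ᵥ z' = u' t - (b t ⬝ᵥ z t) • b t := by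
    ext r
    have e1 : HasDerivAt (fun s => (A s *ᵥ z s) r)
        (∑ q, (b t r * b t q * z t q + A t r q * z' q)) t := by
      simp only [Matrix.mulVec, dotProduct]
      exact HasDerivAt.fun_sum fun q _ => (hA r q t).mul (hzd q)
    simp only [hAz] at e1
    have e2 := e1.unique (hu r t)
    simp only [Pi.sub_apply, Pi.smul_apply, smul_eq_mul, Matrix.mulVec, dotProduct]
    rw [← e2, Finset.sum_add_distrib, Finset.sum_mul]
    have : ∀ q, b t r * b t q * z t q = b t q * z t q * b t r := fun q => by ring
    simp only [this]; ring
  have : z' = (A t)⁻¹ *ᵥ (u' t - (b t ⬝ᵥ z t) • b t) := by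
    rw [← key, Matrix.mulVec_mulVec, Matrix.nonsing_inv_mul _ hunit, Matrix.one_mulVec]
  have h3 := hzd i
  rw [this] at h3
  exact h3

section abs
variable (J : ℕ → ℕ → ℝ → ℝ) (β : ℕ → ℝ → ℝ)

noncomputable def AA (m : ℕ) (t : ℝ) : Matrix (Fin m) (Fin m) ℝ := Matrix.of fun r s => J r s t
noncomputable def bb (m : ℕ) (t : ℝ) : Fin m → ℝ := fun r => β r t
noncomputable def vv (m : ℕ) (t : ℝ) : Fin m → ℝ := fun r => J m r t
noncomputable def xx (m : ℕ) (t : ℝ) : Fin m → ℝ := (AA J m t)⁻¹ *ᵥ bb β m t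
noncomputable def gg (m : ℕ) (t : ℝ) : ℝ := J m m t - vv J m t ⬝ᵥ ((AA J m t)⁻¹ *ᵥ vv J m t)
noncomputable def ww (m : ℕ) (t : ℝ) : ℝ := β m t - vv J m t ⬝ᵥ xx J β m t

variable {J β}

lemma dot_symm
    (hsymm : ∀ r s t, J r s t = J s r t)
    (m : ℕ) (t : ℝ) (u v : Fin m → ℝ) :
    u ⬝ᵥ ((AA J m t)⁻¹ *ᵥ v) = v ⬝ᵥ ((AA J m t)⁻¹ *ᵥ u) := by
  have hT : (AA J m t)ᵀ = AA J m t := by ext r s; simp [AA, hsymm]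
  have hT' : ((AA J m t)⁻¹)ᵀ = (AA J m t)⁻¹ := by rw [Matrix.transpose_nonsing_inv, hT]
  rw [Matrix.dotProduct_mulVec, ← Matrix.mulVec_transpose, hT', dotProduct_comm]

lemma schur
    (hsymm : ∀ r s t, J r s t = J s r t)
    (m : ℕ) (t : ℝ) (hd : (AA J m t).det ≠ 0) :
    (AA J (m+1) t).det = (AA J m t).det * gg J m t := by
  have e : (AA J (m+1) t).submatrix finSumFinEquiv finSumFinEquiv =
      Matrix.fromBlocks (AA J m t) (Matrix.of fun r _ => vv J m t r)
        (Matrix.of fun (_ : Fin 1) r => vv J m t r) (Matrix.of fun _ _ => J m m t) := by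
    ext r s
    rcases r with r | r <;> rcases s with s | s <;>
      simp [AA, vv, Fin.val_eq_zero]
    exact hsymm _ _ _
  let _ := Matrix.invertibleOfIsUnitDet _ hd.isUnit
  rw [← Matrix.det_submatrix_equiv_self (finSumFinEquiv (m := m) (n := 1)), e,
    Matrix.det_fromBlocks₁₁]
  congr 1
  rw [Matrix.det_fin_one]
  simp only [Matrix.sub_apply, gg, Matrix.of_apply, Matrix.invOf_eq_nonsing_inv]
  rw [Matrix.mul_assoc]
  rfl

lemma gg_deriv
    (hJ : ∀ r s t, HasDerivAt (J r s) (β r t * β s t) t)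
    (hsymm : ∀ r s t, J r s t = J s r t) (m : ℕ)
    (hd : ∀ t, (AA J m t).det ≠ 0) (t : ℝ) :
    HasDerivAt (gg J m) (ww J β m t ^ 2) t := by
  have h1 := solve_deriv (AA J m) (bb β m) (vv J m) (fun t => β m t • bb β m t)
    (fun i j t => hJ i j t) (fun i t => hJ m i t) hd
  have h2 : HasDerivAt (fun s => vv J m s ⬝ᵥ ((AA J m s)⁻¹ *ᵥ vv J m s)) _ t :=
    HasDerivAt.fun_sum fun (i : Fin m) _ => (hJ m i t).mul (h1 i t)
  have h3 := (hJ m m t).sub h2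
  refine h3.congr_deriv ?_
  rw [Finset.sum_add_distrib]
  have e1 : ∑ i : Fin m, β m t * β i t * ((AA J m t)⁻¹ *ᵥ vv J m t) i =
      β m t * (bb β m t ⬝ᵥ ((AA J m t)⁻¹ *ᵥ vv J m t)) := by
    simp only [dotProduct, Finset.mul_sum, bb, mul_assoc]
  set κ := bb β m t ⬝ᵥ ((AA J m t)⁻¹ *ᵥ vv J m t) with hκ
  have hκ' : vv J m t ⬝ᵥ xx J β m t = κ := dot_symm hsymm _ _ _ _
  have e2 : ∑ i : Fin m, J m i t * ((AA J m t)⁻¹ *ᵥ (β m t • bb β m t - κ • bb β m t)) i =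
      (β m t - κ) * κ := by
    rw [← sub_smul, Matrix.mulVec_smul]
    change vv J m t ⬝ᵥ ((β m t - κ) • xx J β m t) = _
    rw [dotProduct_smul, hκ', smul_eq_mul]
  rw [e1, e2, ww, hκ']
  ring

lemma AA_xx (m : ℕ) (t : ℝ) (hd : (AA J m t).det ≠ 0) : AA J m t *ᵥ xx J β m t = bb β m t := by
  rw [xx, Matrix.mulVec_mulVec, Matrix.mul_nonsing_inv _ hd.isUnit, Matrix.one_mulVec]

/-- Passing from `x_m` to `x_{m+1}`. -/
lemma xx_step (m : ℕ) (t : ℝ) (hd : (AA J m t).det ≠ 0) (hd' : (AA J (m+1) t).det ≠ 0) :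
    ∀ i, xx J β (m+1) t i = Fin.snoc (α := fun _ => ℝ) (xx J β m t) 0 i +
      ww J β m t * (AA J (m+1) t)⁻¹ i (Fin.last m) := by
  have h : bb β (m+1) t = AA J (m+1) t *ᵥ Fin.snoc (α := fun _ => ℝ) (xx J β m t) 0 +
      ww J β m t • Pi.single (Fin.last m) 1 := by
    ext r
    refine Fin.lastCases ?_ (fun r => ?_) r
    · simp [Matrix.mulVec, dotProduct, Fin.sum_univ_castSucc, ww, bb, AA, vv]
    · have := congrFun (AA_xx (β := β) m t hd) r
      simp only [Matrix.mulVec, dotProduct, AA, bb, Matrix.of_apply] at this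
      simp [Matrix.mulVec, dotProduct, Fin.sum_univ_castSucc, bb, AA, this]
  intro i
  rw [xx, h, Matrix.mulVec_add, Matrix.mulVec_mulVec, Matrix.nonsing_inv_mul _ hd'.isUnit,
    Matrix.one_mulVec, Matrix.mulVec_smul]
  simp

lemma inv_last (m : ℕ) (t : ℝ) :
    (AA J (m+1) t)⁻¹ (Fin.last m) (Fin.last m) = (AA J m t).det / (AA J (m+1) t).det := by
  rw [Matrix.inv_def, Matrix.smul_apply, Matrix.adjugate_fin_succ_eq_det_submatrix,
    Ring.inverse_eq_inv']
  have : (AA J (m+1) t).submatrix (Fin.last m).succAbove (Fin.last m).succAbove = AA J m t := by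
    ext r s; simp [AA]
  rw [this]
  simp [← two_mul, div_eq_inv_mul]

lemma xx_last (m : ℕ) (t : ℝ) (hd : (AA J m t).det ≠ 0) (hd' : (AA J (m+1) t).det ≠ 0) :
    xx J β (m+1) t (Fin.last m) * (AA J (m+1) t).det = ww J β m t * (AA J m t).det := by
  rw [xx_step m t hd hd', inv_last]
  simp
  field_simp

lemma phi_step
    (hsymm : ∀ r s t, J r s t = J s r t)
    (m : ℕ) (t : ℝ) (hd : (AA J m t).det ≠ 0) (hd' : (AA J (m+1) t).det ≠ 0) :
    bb β (m+1) t ⬝ᵥ xx J β (m+1) t = bb β m t ⬝ᵥ xx J β m t +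
      ww J β m t * xx J β (m+1) t (Fin.last m) := by
  have h : xx J β (m+1) t = Fin.snoc (α := fun _ => ℝ) (xx J β m t) 0 +
      ww J β m t • ((AA J (m+1) t)⁻¹ *ᵥ Pi.single (Fin.last m) 1) := by
    ext i; rw [xx_step m t hd hd']; simp
  conv_lhs => rw [h]
  rw [dotProduct_add, dotProduct_smul, dot_symm hsymm]
  congr 1
  · simp [dotProduct, Fin.sum_univ_castSucc, bb]
  · change _ • (Pi.single (Fin.last m) 1 ⬝ᵥ xx J β (m+1) t) = _
    simp

lemma tau_deriv
    (hJ : ∀ r s t, HasDerivAt (J r s) (β r t * β s t) t)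
    (hsymm : ∀ r s t, J r s t = J s r t) (n : ℕ)
    (hd : ∀ m ≤ n, ∀ t, (AA J m t).det ≠ 0) (m : ℕ) (hm : m ≤ n) (t : ℝ) :
    HasDerivAt (fun t => (AA J m t).det)
      ((AA J m t).det * (bb β m t ⬝ᵥ xx J β m t)) t := by
  induction m generalizing t with
  | zero => simpa using hasDerivAt_const t (1:ℝ)
  | succ m ih =>
    have hm' : m ≤ n := by omega
    have e : (fun t => (AA J (m+1) t).det) = fun t => (AA J m t).det * gg J m t :=
      funext fun t => schur hsymm m t (hd m hm' t)
    have h := (ih hm' t).mul (gg_deriv hJ hsymm m (hd m hm') t)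
    rw [e]
    refine h.congr_deriv ?_
    rw [phi_step hsymm m t (hd m hm' t) (hd _ hm t)]
    have h1 := xx_last (β := β) m t (hd m hm' t) (hd _ hm t)
    have h2 := schur hsymm m t (hd m hm' t)
    rw [h2] at h1 ⊢
    linear_combination (-ww J β m t) * h1

lemma phi_deriv
    (hJ : ∀ r s t, HasDerivAt (J r s) (β r t * β s t) t)
    (hβ : ∀ r t, HasDerivAt (β r) (β (r+1) t) t)
    (hshift : ∀ r s t, J (r+1) s t + J r (s+1) t = β r t * β s t)
    (hsymm : ∀ r s t, J r s t = J s r t) (m : ℕ)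
    (hd : ∀ t, (AA J (m+1) t).det ≠ 0) (t : ℝ) :
    HasDerivAt (fun t => bb β (m+1) t ⬝ᵥ xx J β (m+1) t)
      (2 * (xx J β (m+1) t (Fin.last m) * ww J β (m+1) t)) t := by
  have h1 := solve_deriv (AA J (m+1)) (bb β (m+1)) (bb β (m+1)) (fun t r => β (r+1) t)
    (fun i j t => hJ i j t) (fun i t => hβ i t) hd
  have h2 : HasDerivAt (fun s => bb β (m+1) s ⬝ᵥ xx J β (m+1) s) _ t :=
    HasDerivAt.fun_sum fun (i : Fin (m+1)) _ => (hβ i t).mul (h1 i t)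
  refine h2.congr_deriv ?_
  rw [Finset.sum_add_distrib]
  change (∑ i : Fin (m+1), β (i+1) t * xx J β (m+1) t i) +
    bb β (m+1) t ⬝ᵥ ((AA J (m+1) t)⁻¹ *ᵥ _) = _
  rw [Matrix.mulVec_sub, dotProduct_sub, dot_symm hsymm, Matrix.mulVec_smul, dotProduct_smul]
  change _ + ((∑ i : Fin (m+1), β (i+1) t * xx J β (m+1) t i) -
    (bb β (m+1) t ⬝ᵥ xx J β (m+1) t) * (bb β (m+1) t ⬝ᵥ xx J β (m+1) t)) = _
  have hx := AA_xx (β := β) (m+1) t (hd t)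
  set x := xx J β (m+1) t with hxdef
  have hrow : ∀ r : Fin (m+1), ∑ s : Fin (m+1), J (r+1) s t * x s =
      β (r+1) t - if r = Fin.last m then ww J β (m+1) t else 0 := by
    intro r
    refine Fin.lastCases ?_ (fun r => ?_) r
    · simp [ww, vv, dotProduct, ← hxdef]
    · have := congrFun hx r.succ
      simp only [Matrix.mulVec, dotProduct, AA, bb, Matrix.of_apply, Fin.val_succ] at this
      simp [this, (Fin.castSucc_lt_last r).ne]
  have hS : ∑ r : Fin (m+1), x r * ∑ s : Fin (m+1), J (r+1) s t * x s =
      (∑ i : Fin (m+1), β (i+1) t * x i) - x (Fin.last m) * ww J β (m+1) t := by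
    simp only [hrow, mul_sub, Finset.sum_sub_distrib]
    simp [mul_comm]
  have hS2 : 2 * ∑ r : Fin (m+1), x r * ∑ s : Fin (m+1), J (r+1) s t * x s =
      (bb β (m+1) t ⬝ᵥ x) * (bb β (m+1) t ⬝ᵥ x) := by
    have hsw : ∑ r : Fin (m+1), x r * ∑ s : Fin (m+1), J (r+1) s t * x s =
        ∑ r : Fin (m+1), ∑ s : Fin (m+1), J r (s+1) t * x s * x r := by
      rw [Finset.sum_comm]
      refine Finset.sum_congr rfl fun r _ => ?_
      rw [Finset.mul_sum]
      refine Finset.sum_congr rfl fun s _ => ?_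
      rw [hsymm]; ring
    rw [two_mul]
    nth_rw 2 [hsw]
    simp only [dotProduct, bb]
    rw [Finset.sum_mul_sum]
    simp only [Finset.mul_sum, ← Finset.sum_add_distrib]
    refine Finset.sum_congr rfl fun r _ => Finset.sum_congr rfl fun s _ => ?_
    linear_combination (x r * x s) * hshift r s t
  linear_combination hS2 - 2 * hS

lemma main_abs
    (hJ : ∀ r s t, HasDerivAt (J r s) (β r t * β s t) t)
    (hβ : ∀ r t, HasDerivAt (β r) (β (r+1) t) t)
    (hshift : ∀ r s t, J (r+1) s t + J r (s+1) t = β r t * β s t)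
    (hsymm : ∀ r s t, J r s t = J s r t) (n : ℕ)
    (hd : ∀ m ≤ n, ∀ t, (AA J m t).det ≠ 0) (hd0 : ∀ m, n < m → ∀ t, (AA J m t).det = 0)
    (m : ℕ) (t : ℝ) (τ : ℕ → ℝ → ℝ) (hτ : ∀ m t, τ m t = (AA J m t).det) :
    (deriv (deriv (τ (m+1))) t * τ (m+1) t - (deriv (τ (m+1)) t)^2)^2 =
      4 * (deriv (τ (m+2)) t * τ (m+1) t - τ (m+2) t * deriv (τ (m+1)) t) *
        (deriv (τ (m+1)) t * τ m t - τ (m+1) t * deriv (τ m) t) := by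
  have hτ' : τ = fun m t => (AA J m t).det := by ext m t; exact hτ m t
  by_cases hm : m + 1 ≤ n
  · have hm' : m ≤ n := by omega
    have D := tau_deriv hJ hsymm n hd (m+1) hm
    have D0 := tau_deriv hJ hsymm n hd m hm'
    have D' := phi_deriv hJ hβ hshift hsymm m (hd _ hm) t
    have g1 := gg_deriv hJ hsymm (m+1) (hd _ hm) t
    have g0 := gg_deriv hJ hsymm m (hd _ hm') t
    have e1 : τ (m+2) = fun t => (AA J (m+1) t).det * gg J (m+1) t := by
      ext t; rw [hτ]; exact schur hsymm (m+1) t (hd _ hm t)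
    have e0 : τ (m+1) = fun t => (AA J m t).det * gg J m t := by
      ext t; rw [hτ]; exact schur hsymm m t (hd _ hm' t)
    have d1' : HasDerivAt (τ (m+2)) _ t := ((D t).mul g1).congr_of_eventuallyEq (.of_eq e1)
    have d1 := d1'.deriv
    have d0' : HasDerivAt (τ (m+1)) _ t := ((D0 t).mul g0).congr_of_eventuallyEq (.of_eq e0)
    have d0 := d0'.deriv
    have dd : deriv (τ (m+1)) = fun t => (AA J (m+1) t).det * (bb β (m+1) t ⬝ᵥ xx J β (m+1) t) := by
      ext t; rw [hτ']; exact (D t).deriv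
    have d2' : HasDerivAt (deriv (τ (m+1))) _ t := ((D t).mul D').congr_of_eventuallyEq (.of_eq dd)
    have d2 := d2'.deriv
    have dm' : HasDerivAt (τ m) _ t := (D0 t).congr_of_eventuallyEq (.of_eq (funext (hτ m)))
    have dm := dm'.deriv
    have hl := xx_last (β := β) m t (hd m hm' t) (hd _ hm t)
    have hsc := schur hsymm m t (hd m hm' t)
    have F1 : deriv (τ (m+2)) t * τ (m+1) t - τ (m+2) t * deriv (τ (m+1)) t =
        ((AA J (m+1) t).det * ww J β (m+1) t)^2 := by
      rw [d1, dd, hτ, e1]; ring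
    have F0 : deriv (τ (m+1)) t * τ m t - τ (m+1) t * deriv (τ m) t =
        ((AA J m t).det * ww J β m t)^2 := by
      rw [d0, dm, e0, hτ]; ring
    have F2 : deriv (deriv (τ (m+1))) t * τ (m+1) t - (deriv (τ (m+1)) t)^2 =
        2 * ((AA J (m+1) t).det * ww J β (m+1) t) *
          (xx J β (m+1) t (Fin.last m) * (AA J (m+1) t).det) := by
      rw [d2, dd, hτ]; ring
    rw [F2, hl, mul_assoc 4, F1, F0]; ring
  · have h0 : τ (m+1) = fun _ => 0 := by
      ext t; rw [hτ]; exact hd0 _ (by omega) t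
    simp [h0]
end abs

section conc
variable {n : ℕ} (ξ : Fin n → ℝ) 

noncomputable def CC : Matrix (Fin n) (Fin n) ℝ := Matrix.of fun p q => 1 / (ξ p + ξ q)

lemma quad_nonneg (hξ0 : ∀ p, 0 < ξ p) (y : Fin n → ℝ) :
    0 ≤ ∑ p, ∑ q, y p * y q / (ξ p + ξ q) := by
  set F : ℝ → ℝ := fun s => ∑ p, ∑ q, y p * y q / (ξ p + ξ q) * Real.exp ((ξ p + ξ q) * s) with hF
  have hder : ∀ s, HasDerivAt F ((∑ p, y p * Real.exp (ξ p * s))^2) s := by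
    intro s
    have : HasDerivAt F (∑ p, ∑ q, y p * y q / (ξ p + ξ q) *
        (Real.exp ((ξ p + ξ q) * s) * ((ξ p + ξ q) * 1))) s := by
      refine HasDerivAt.fun_sum fun p _ => HasDerivAt.fun_sum fun q _ => ?_
      exact (((hasDerivAt_id s).const_mul _).exp).const_mul _
    refine this.congr_deriv ?_
    rw [sq, Finset.sum_mul_sum]
    refine Finset.sum_congr rfl fun p _ => Finset.sum_congr rfl fun q _ => ?_
    have := hξ0 p; have := hξ0 q
    rw [add_mul, Real.exp_add]
    field_simp
  have hmono : Monotone F := by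
    refine monotone_of_deriv_nonneg (fun s => (hder s).differentiableAt) fun s => ?_
    rw [(hder s).deriv]; positivity
  have hlim : Filter.Tendsto F Filter.atBot (nhds 0) := by
    have : Filter.Tendsto F Filter.atBot
        (nhds (∑ p : Fin n, ∑ q : Fin n, y p * y q / (ξ p + ξ q) * 0)) := by
      refine tendsto_finsetSum _ fun p _ => tendsto_finsetSum _ fun q _ => ?_
      refine Filter.Tendsto.const_mul _ (Real.tendsto_exp_atBot.comp ?_)
      exact Filter.tendsto_id.const_mul_atBot (add_pos (hξ0 p) (hξ0 q))
    simpa using this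
  have := hmono.le_of_tendsto hlim 0
  simpa [hF] using this

lemma CC_posSemidef (hξ0 : ∀ p, 0 < ξ p) : (CC ξ).PosSemidef := by
  refine Matrix.PosSemidef.of_dotProduct_mulVec_nonneg ?_ fun y => ?_
  · ext p q; simp [CC, add_comm]
  · have := quad_nonneg ξ hξ0 y
    suffices h : star y ⬝ᵥ (CC ξ *ᵥ y) = ∑ p, ∑ q, y p * y q / (ξ p + ξ q) by rw [h]; exact this
    simp only [dotProduct, Matrix.mulVec, CC, Finset.mul_sum, Matrix.of_apply]
    refine Finset.sum_congr rfl fun p _ => Finset.sum_congr rfl fun q _ => ?_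
    rw [star_trivial]; ring

lemma CC_ker (hξ0 : ∀ p, 0 < ξ p) (y : Fin n → ℝ) (h : CC ξ *ᵥ y = 0) :
    ∑ p, y p = 0 ∧ CC ξ *ᵥ (fun p => ξ p * y p) = 0 := by
  have hrow : ∀ p, ∑ q, 1 / (ξ p + ξ q) * y q = 0 := fun p => congrFun h p
  have h2 : ∀ p, ∑ q, 1 / (ξ p + ξ q) * (ξ q * y q) = ∑ q, y q := by
    intro p
    have : ∑ q, 1 / (ξ p + ξ q) * (ξ q * y q) + ξ p * ∑ q, 1 / (ξ p + ξ q) * y q = ∑ q, y q := by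
      rw [Finset.mul_sum, ← Finset.sum_add_distrib]
      refine Finset.sum_congr rfl fun q _ => ?_
      have := hξ0 p; have := hξ0 q
      field_simp
      ring
    rw [hrow] at this; simpa using this
  have h3 : (∑ q, y q) * (∑ q, y q) = 0 := by
    have : ∑ p, y p * ∑ q, 1 / (ξ p + ξ q) * (ξ q * y q) = 0 := by
      simp only [Finset.mul_sum]
      rw [Finset.sum_comm]
      refine Finset.sum_eq_zero fun q _ => ?_
      have := hrow q
      calc _ = (ξ q * y q) * ∑ p, 1 / (ξ q + ξ p) * y p := by
            rw [Finset.mul_sum]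
            refine Finset.sum_congr rfl fun p _ => ?_
            rw [add_comm (ξ p)]; ring
        _ = 0 := by rw [this, mul_zero]
    simp only [h2] at this
    rwa [← Finset.sum_mul] at this
  have h4 : ∑ q, y q = 0 := by simpa using h3
  refine ⟨h4, ?_⟩
  ext p
  change ∑ q, 1 / (ξ p + ξ q) * (ξ q * y q) = 0
  rw [h2, h4]

lemma CC_inj (hξ0 : ∀ p, 0 < ξ p) (hinj : Function.Injective ξ) (y : Fin n → ℝ)
    (h : CC ξ *ᵥ y = 0) : y = 0 := by
  have hall : ∀ i : ℕ, CC ξ *ᵥ (fun p => ξ p ^ i * y p) = 0 := by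
    intro i
    induction i with
    | zero => simpa using h
    | succ i ih =>
      have := (CC_ker ξ hξ0 _ ih).2
      simpa only [pow_succ', mul_assoc] using this
  refine Matrix.eq_zero_of_forall_pow_sum_mul_pow_eq_zero hinj fun i => ?_
  have := (CC_ker ξ hξ0 _ (hall i)).1
  simpa [mul_comm] using this

lemma quad_pos (hξ0 : ∀ p, 0 < ξ p) (hinj : Function.Injective ξ) (y : Fin n → ℝ)
    (h : y ⬝ᵥ (CC ξ *ᵥ y) = 0) : y = 0 := by
  refine CC_inj ξ hξ0 hinj y ?_
  exact ((CC_posSemidef ξ hξ0).dotProduct_mulVec_zero_iff y).1 (by simpa using h)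

noncomputable def WW (c : Fin n → ℝ) (j : ℤ) (m : ℕ) : Matrix (Fin n) (Fin m) ℝ :=
  Matrix.of fun p r => c p * ξ p ^ (j + (r : ℕ))

lemma fact (c : Fin n → ℝ) (j : ℤ) (m : ℕ) (hξ0 : ∀ p, 0 < ξ p) :
    (Matrix.of fun r s : Fin m => Jmom n ξ c (j + (r:ℕ)) (j + (s:ℕ))) =
      (WW ξ c j m)ᵀ * (CC ξ * WW ξ c j m) := by
  ext r s
  simp only [Jmom, WW, CC, Matrix.mul_apply, Matrix.of_apply, Matrix.transpose_apply, Finset.mul_sum]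
  refine Finset.sum_congr rfl fun p _ => Finset.sum_congr rfl fun q _ => ?_
  ring

lemma det_zero (c : Fin n → ℝ) (j : ℤ) (m : ℕ) (hξ0 : ∀ p, 0 < ξ p) (hm : n < m) :
    (Matrix.of fun r s : Fin m => Jmom n ξ c (j + (r:ℕ)) (j + (s:ℕ))).det = 0 := by
  rw [fact ξ c j m hξ0]
  by_contra hne
  have h1 := Matrix.rank_of_isUnit _ ((Matrix.isUnit_iff_isUnit_det _).2 (Ne.isUnit hne))
  have h2 := Matrix.rank_mul_le_left (WW ξ c j m)ᵀ (CC ξ * WW ξ c j m)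
  have h3 := Matrix.rank_le_width (WW ξ c j m)ᵀ
  rw [Fintype.card_fin] at h1
  omega

lemma det_ne (c : Fin n → ℝ) (j : ℤ) (m : ℕ) (hξ0 : ∀ p, 0 < ξ p) (hinj : Function.Injective ξ)
    (hc : ∀ p, 0 < c p) (hm : m ≤ n) :
    (Matrix.of fun r s : Fin m => Jmom n ξ c (j + (r:ℕ)) (j + (s:ℕ))).det ≠ 0 := by
  rw [fact ξ c j m hξ0]
  intro h0
  obtain ⟨a, ha, h⟩ := Matrix.exists_mulVec_eq_zero_iff.2 h0
  apply ha
  have h1 : (WW ξ c j m *ᵥ a) ⬝ᵥ (CC ξ *ᵥ (WW ξ c j m *ᵥ a)) = 0 := by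
    have : a ⬝ᵥ (((WW ξ c j m)ᵀ * (CC ξ * WW ξ c j m)) *ᵥ a) = 0 := by rw [h]; simp
    rw [← Matrix.mulVec_mulVec, ← Matrix.mulVec_mulVec, Matrix.dotProduct_mulVec,
      Matrix.vecMul_transpose] at this
    exact this
  have h2 := quad_pos ξ hξ0 hinj _ h1
  have h3 : ∀ p, ∑ r : Fin m, a r * ξ p ^ (r : ℕ) = 0 := by
    intro p
    have := congrFun h2 p
    simp only [Matrix.mulVec, dotProduct, WW, Matrix.of_apply, Pi.zero_apply] at this
    have e : ∑ r : Fin m, c p * ξ p ^ (j + (r : ℕ)) * a r =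
        (c p * ξ p ^ j) * ∑ r : Fin m, a r * ξ p ^ (r : ℕ) := by
      rw [Finset.mul_sum]
      refine Finset.sum_congr rfl fun r _ => ?_
      rw [zpow_add₀ (hξ0 p).ne', zpow_natCast]; ring
    rw [e] at this
    have h5 : c p * ξ p ^ j ≠ 0 := (mul_pos (hc p) (zpow_pos (hξ0 p) j)).ne'
    exact (mul_eq_zero.1 this).resolve_left h5
  exact Matrix.eq_zero_of_forall_index_sum_mul_pow_eq_zero
    (f := fun i : Fin m => ξ (Fin.castLE hm i)) (hinj.comp (Fin.castLE_injective hm))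
    (fun i => by simpa [mul_comm] using h3 _)

end conc

end CToda

/-- The quartic form (3.8) of the C-Toda lattice: under `c_p(t) = c_p(0) e^{ξ_p t}`, for all
`j ∈ ℤ`, `k ≥ 1`, `t ∈ ℝ`, the tau functions `τ_k = τ_k^{(j,j)}(t)` satisfy
`(τ̈_k τ_k - τ̇_k²)² = 4 (τ̇_{k+1} τ_k - τ_{k+1} τ̇_k)(τ̇_k τ_{k-1} - τ_k τ̇_{k-1})`. -/
theorem stmt_17 (n : ℕ) (hn : 1 ≤ n) (ξ c0 : Fin n → ℝ)
    (hξ0 : ∀ p, 0 < ξ p) (hξmono : StrictMono ξ) (hc : ∀ p, 0 < c0 p)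
    (j k : ℤ) (hk : 1 ≤ k) (t : ℝ) :
    (deriv (deriv (fun s => tauDet n ξ (cT n ξ c0 s) j j k)) t * tauDet n ξ (cT n ξ c0 t) j j k -
        (deriv (fun s => tauDet n ξ (cT n ξ c0 s) j j k) t) ^ 2) ^ 2 =
      4 * (deriv (fun s => tauDet n ξ (cT n ξ c0 s) j j (k + 1)) t * tauDet n ξ (cT n ξ c0 t) j j k -
            tauDet n ξ (cT n ξ c0 t) j j (k + 1) * deriv (fun s => tauDet n ξ (cT n ξ c0 s) j j k) t) *
          (deriv (fun s => tauDet n ξ (cT n ξ c0 s) j j k) t * tauDet n ξ (cT n ξ c0 t) j j (k - 1) -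
            tauDet n ξ (cT n ξ c0 t) j j k * deriv (fun s => tauDet n ξ (cT n ξ c0 s) j j (k - 1)) t) := by
  obtain ⟨m, rfl⟩ : ∃ m : ℕ, k = ((m + 1 : ℕ) : ℤ) := ⟨(k - 1).toNat, by omega⟩
  have e1 : (((m + 1 : ℕ) : ℤ) + 1) = ((m + 2 : ℕ) : ℤ) := by push_cast; ring
  have e2 : (((m + 1 : ℕ) : ℤ) - 1) = (m : ℤ) := by push_cast; ring
  rw [e1, e2]
  have hcT : ∀ t p, HasDerivAt (fun s => cT n ξ c0 s p) (ξ p * cT n ξ c0 t p) t := by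
    intro t p
    have := (((hasDerivAt_id t).const_mul (ξ p)).exp).const_mul (c0 p)
    refine this.congr_deriv ?_
    simp only [cT, id]; ring
  refine CToda.main_abs (J := fun r s t => Jmom n ξ (cT n ξ c0 t) (j + (r:ℕ)) (j + (s:ℕ)))
    (β := fun r t => betaM n ξ (cT n ξ c0 t) (j + (r:ℕ))) ?_ ?_ ?_ ?_ n ?_ ?_ m t
    (fun m s => tauDet n ξ (cT n ξ c0 s) j j (m : ℤ)) ?_
  · intro r s t
    have : HasDerivAt (fun t => Jmom n ξ (cT n ξ c0 t) (j + (r:ℕ)) (j + (s:ℕ))) _ t :=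
      HasDerivAt.fun_sum fun p _ => HasDerivAt.fun_sum fun q _ =>
        ((hcT t p).mul (hcT t q)).const_mul _
    refine this.congr_deriv ?_
    simp only [betaM, Finset.sum_mul_sum]
    refine Finset.sum_congr rfl fun p _ => Finset.sum_congr rfl fun q _ => ?_
    have := hξ0 p; have := hξ0 q
    field_simp
  · intro r t
    have : HasDerivAt (fun t => betaM n ξ (cT n ξ c0 t) (j + (r:ℕ))) _ t :=
      HasDerivAt.fun_sum fun p _ => (hcT t p).const_mul _
    refine this.congr_deriv ?_
    simp only [betaM]
    refine Finset.sum_congr rfl fun p _ => ?_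
    push_cast
    rw [← add_assoc, zpow_add_one₀ (hξ0 p).ne']; ring
  · intro r s t
    simp only [betaM, Jmom, Finset.sum_mul_sum, ← Finset.sum_add_distrib]
    refine Finset.sum_congr rfl fun p _ => Finset.sum_congr rfl fun q _ => ?_
    push_cast
    rw [← add_assoc, ← add_assoc, zpow_add_one₀ (hξ0 p).ne', zpow_add_one₀ (hξ0 q).ne']
    have := hξ0 p; have := hξ0 q
    field_simp
  · intro r s t
    simp only [Jmom]
    rw [Finset.sum_comm]
    refine Finset.sum_congr rfl fun p _ => Finset.sum_congr rfl fun q _ => ?_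
    rw [add_comm (ξ q)]; ring
  · intro m hm t
    exact CToda.det_ne ξ _ j m hξ0 hξmono.injective
      (fun p => mul_pos (hc p) (Real.exp_pos _)) hm
  · intro m hm t
    exact CToda.det_zero ξ _ j m hξ0 hm
  · intro m t
    simp only [tauDet]
    rw [if_neg (by omega)]
    rfl
end

section
/- Let k be an integer, t ∈ ℝ, and let f, g, h : ℝ → ℝ be twice differentiable at t (playing the roles of τ_{k−1}, τ_k, τ_{k+1}). For ε ≠ 0 define D(ε) = ( ε^{2k²} ( g(t) g(t+2ε) − g(t+ε)² ) + ε^{2k²+2} ( h(t) f(t+2ε) − h(t+ε) f(t+ε) ) )² − 4 · ε^{2k²+2k+1} ( h(t+ε) g(t+ε) − h(t) g(t+2ε) ) · ε^{2k²−2k+1} ( g(t+ε) f(t+ε) − g(t) f(t+2ε) ). Then lim_{ε→0} ε^{−(4k²+4)} D(ε) = ( g(t) g''(t) − g'(t)² )² − 4 ( h'(t) g(t) − h(t) g'(t) ) ( g'(t) f(t) − g(t) f'(t) ); that is, under the scaling τ̃_{k,m} = ε^{k²} τ_k(mε), t = mε, the 1+1 dimensional reduction of the discrete CKP equation converges as ε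 → 0 to the quartic form of the Toda lattice of CKP type ( τ̈_k τ_k − (τ̇_k)² )² = 4 ( τ̇_{k+1} τ_k − τ_{k+1} τ̇_k ) ( τ̇_k τ_{k−1} − τ_k τ̇_{k−1} ). -/
open Filter

theorem tendsto_div_aux {φ : ℝ → ℝ} {d : ℝ} (hφ : HasDerivAt φ d 0) (h0 : φ 0 = 0) :
    Tendsto (fun ε => φ ε / ε) (nhdsWithin 0 {(0 : ℝ)}ᶜ) (nhds d) := by
  have h := hasDerivAt_iff_tendsto_slope.mp hφ
  refine h.congr fun ε => ?_
  rw [slope_def_field, h0]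
  simp

theorem shift_one_aux {u : ℝ → ℝ} {t ε d : ℝ} (hu : HasDerivAt u d (t + ε)) :
    HasDerivAt (fun x => u (t + x)) d ε := by
  have h2 : HasDerivAt (fun x : ℝ => t + x) 1 ε := (hasDerivAt_id ε).const_add t
  exact (HasDerivAt.comp ε hu h2).congr_deriv (mul_one d)

theorem shift_two_aux {u : ℝ → ℝ} {t ε d : ℝ} (hu : HasDerivAt u d (t + 2 * ε)) :
    HasDerivAt (fun x => u (t + 2 * x)) (d * 2) ε := by
  have h2 : HasDerivAt (fun x : ℝ => t + 2 * x) 2 ε := by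
    simpa using ((hasDerivAt_id ε).const_mul 2).const_add t
  exact HasDerivAt.comp ε hu h2

theorem second_order_aux {t : ℝ} {g : ℝ → ℝ}
    (hg : ∀ᶠ s in nhds t, DifferentiableAt ℝ g s) (hg' : DifferentiableAt ℝ (deriv g) t) :
    Tendsto (fun ε => (g t * g (t + 2 * ε) - g (t + ε) ^ 2) / ε ^ 2)
      (nhdsWithin 0 {(0 : ℝ)}ᶜ) (nhds (g t * deriv (deriv g) t - (deriv g t) ^ 2)) := by
  have c1 : Tendsto (fun ε : ℝ => t + ε) (nhds 0) (nhds t) := by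
    have : Continuous (fun ε : ℝ => t + ε) := by fun_prop
    simpa using this.tendsto 0
  have c2 : Tendsto (fun ε : ℝ => t + 2 * ε) (nhds 0) (nhds t) := by
    have : Continuous (fun ε : ℝ => t + 2 * ε) := by fun_prop
    simpa using this.tendsto 0
  have gd := hg.self_of_nhds.hasDerivAt
  have gd1 : HasDerivAt (fun x => g (t + x)) (deriv g t) 0 :=
    shift_one_aux (by simpa using gd)
  have gderiv_one : HasDerivAt (fun x => deriv g (t + x)) (deriv (deriv g) t) 0 :=
    shift_one_aux (by simpa using hg'.hasDerivAt)
  have gderiv_two : HasDerivAt (fun x => deriv g (t + 2 * x)) (deriv (deriv g) t * 2) 0 :=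
    shift_two_aux (by simpa using hg'.hasDerivAt)
  have gd2 : HasDerivAt (fun x => g (t + 2 * x)) (deriv g t * 2) 0 :=
    shift_two_aux (by simpa using gd)
  have hnum : HasDerivAt (fun ε => g t * g (t + 2 * ε) - g (t + ε) ^ 2) _ 0 :=
    (gd2.const_mul (g t)).sub (gd1.pow 2)
  refine HasDerivAt.lhopital_zero_nhdsNE
    (f' := fun ε => 2 * (g t * deriv g (t + 2 * ε) - g (t + ε) * deriv g (t + ε)))
    (g' := fun ε => 2 * ε) ?_ ?_ ?_ ?_ ?_ ?_
  · refine Filter.Eventually.filter_mono nhdsWithin_le_nhds ?_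
    filter_upwards [c1.eventually hg, c2.eventually hg] with ε h1 h2
    have a1 := shift_one_aux h1.hasDerivAt
    have a2 := shift_two_aux h2.hasDerivAt
    have := (a2.const_mul (g t)).sub (a1.pow 2)
    refine this.congr_deriv ?_
    simp
    ring
  · refine Filter.Eventually.of_forall fun ε => ?_
    simpa using hasDerivAt_pow 2 ε
  · filter_upwards [self_mem_nhdsWithin] with ε hε
    exact mul_ne_zero two_ne_zero hε
  · have := hnum.continuousAt.tendsto
    refine Tendsto.mono_left ?_ nhdsWithin_le_nhds
    convert this using 2
    simp
    ring
  · refine Tendsto.mono_left ?_ nhdsWithin_le_nhds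
    have : Continuous (fun ε : ℝ => ε ^ 2) := by fun_prop
    simpa using this.tendsto 0
  · have hd := (gderiv_two.const_mul (g t)).sub (gd1.mul gderiv_one)
    have := tendsto_div_aux hd (by simp)
    refine Tendsto.congr (fun ε => ?_) (this.trans (le_of_eq ?_))
    · simp only [Pi.sub_apply, Pi.mul_apply]
      rw [mul_div_mul_left _ _ two_ne_zero]
    · congr 1
      simp
      ring

theorem first_order_aux {t : ℝ} {u v : ℝ → ℝ}
    (hu : DifferentiableAt ℝ u t) (hv : DifferentiableAt ℝ v t) :
    HasDerivAt (fun ε => u (t + ε) * v (t + ε) - u t * v (t + 2 * ε))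
      (deriv u t * v t - u t * deriv v t) 0 := by
  have u1 : HasDerivAt (fun x => u (t + x)) (deriv u t) 0 :=
    shift_one_aux (by simpa using hu.hasDerivAt)
  have v1 : HasDerivAt (fun x => v (t + x)) (deriv v t) 0 :=
    shift_one_aux (by simpa using hv.hasDerivAt)
  have v2 : HasDerivAt (fun x => v (t + 2 * x)) (deriv v t * 2) 0 :=
    shift_two_aux (by simpa using hv.hasDerivAt)
  refine ((u1.mul v1).sub (v2.const_mul (u t))).congr_deriv ?_
  simp
  ring

/-- Theorem 4.1 (continuum limit of the 1+1 dimensional reduction of the discrete CKP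
equation): let `f, g, h` (playing the roles of `τ_{k-1}, τ_k, τ_{k+1}`) be twice
differentiable at `t` (differentiable near `t`, with derivative differentiable at `t`).
Under the scaling `τ̃_{k,m} = ε^{k²} τ_k(mε)`, `t = mε`, the discrete-CKP quantity `D(ε)`
satisfies `ε^{-(4k²+4)} D(ε) → (g g'' - g'²)² - 4 (h' g - h g')(g' f - g f')` as `ε → 0`,
i.e. the discrete equation converges to the quartic form of the Toda lattice of CKP type. -/
theorem stmt_19 (k : ℤ) (t : ℝ) (f g h : ℝ → ℝ)
    (hf : ∀ᶠ s in nhds t, DifferentiableAt ℝ f s) (hf' : DifferentiableAt ℝ (deriv f) t)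
    (hg : ∀ᶠ s in nhds t, DifferentiableAt ℝ g s) (hg' : DifferentiableAt ℝ (deriv g) t)
    (hh : ∀ᶠ s in nhds t, DifferentiableAt ℝ h s) (hh' : DifferentiableAt ℝ (deriv h) t) :
    Tendsto (fun ε : ℝ =>
        (ε ^ (-(4 * k ^ 2 + 4)) : ℝ) *
          ((ε ^ (2 * k ^ 2) * (g t * g (t + 2 * ε) - g (t + ε) ^ 2) +
              ε ^ (2 * k ^ 2 + 2) * (h t * f (t + 2 * ε) - h (t + ε) * f (t + ε))) ^ 2 -
            4 * (ε ^ (2 * k ^ 2 + 2 * k + 1) * (h (t + ε) * g (t + ε) - h t * g (t + 2 * ε))) *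
              (ε ^ (2 * k ^ 2 - 2 * k + 1) * (g (t + ε) * f (t + ε) - g t * f (t + 2 * ε)))))
      (nhdsWithin 0 {(0 : ℝ)}ᶜ)
      (nhds ((g t * deriv (deriv g) t - (deriv g t) ^ 2) ^ 2 -
        4 * (deriv h t * g t - h t * deriv g t) * (deriv g t * f t - g t * deriv f t))) := by
  have A := second_order_aux hg hg'
  have df := hf.self_of_nhds
  have dg := hg.self_of_nhds
  have dh := hh.self_of_nhds
  have B0 := (first_order_aux dh df).continuousAt.tendsto.mono_left
    (nhdsWithin_le_nhds (s := {(0 : ℝ)}ᶜ))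
  have B : Tendsto (fun ε => h (t + ε) * f (t + ε) - h t * f (t + 2 * ε))
      (nhdsWithin 0 {(0 : ℝ)}ᶜ) (nhds 0) := by simpa using B0
  have C := tendsto_div_aux (first_order_aux dh dg) (by simp)
  have D := tendsto_div_aux (first_order_aux dg df) (by simp)
  have T := ((A.sub B).pow 2).sub ((C.const_mul 4).mul D)
  rw [sub_zero] at T
  refine T.congr' ?_
  filter_upwards [self_mem_nhdsWithin] with ε hε
  have hε : ε ≠ 0 := hε
  have e0 : ε ^ (-(4 * k ^ 2 + 4)) = ((ε ^ (2 * k ^ 2)) ^ 2 * ε ^ 4)⁻¹ := by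
    rw [zpow_neg, zpow_add₀ hε, show 4 * k ^ 2 = 2 * k ^ 2 + 2 * k ^ 2 by ring, zpow_add₀ hε,
      ← sq]
    norm_cast
  have e1 : ε ^ (2 * k ^ 2 + 2) = ε ^ (2 * k ^ 2) * ε ^ 2 := by
    rw [zpow_add₀ hε]
    norm_cast
  have e2 : ε ^ (2 * k ^ 2 + 2 * k + 1) = ε ^ (2 * k ^ 2) * ε ^ (2 * k) * ε := by
    rw [zpow_add₀ hε, zpow_add₀ hε, zpow_one]
  have e3 : ε ^ (2 * k ^ 2 - 2 * k + 1) = ε ^ (2 * k ^ 2) * (ε ^ (2 * k))⁻¹ * ε := by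
    rw [zpow_add₀ hε, zpow_sub₀ hε, zpow_one, div_eq_mul_inv]
  rw [e0, e1, e2, e3]
  have n1 : ε ^ (2 * k ^ 2) ≠ 0 := zpow_ne_zero _ hε
  have n2 : ε ^ (2 * k) ≠ 0 := zpow_ne_zero _ hε
  generalize ε ^ (2 * k ^ 2) = P at *
  generalize ε ^ (2 * k) = Q at *
  field_simp
  ring
end
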